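/- If λ ≥ 0, the set of ground states G = {ψ ∈ Σ₁ : E(ψ) = E_min} consists exactly of {e^{iθ}ψ_min : θ ∈ ℝ} for a unique positive, even function ψ_min ∈ Σ₁. -/

import Mathlib

open MeasureTheory Real

/-- Membership in the energy space `X`. -/
def InX (ψ : ℝ → ℂ) : Prop :=
  Differentiable ℝ ψ ∧
  Integrable (fun ξ : ℝ => ‖ψ ξ‖ ^ 2) ∧
  Integrable (fun ξ : ℝ => ‖deriv ψ ξ‖ ^ 2) ∧
  Integrable (fun ξ : ℝ => ξ ^ 2 * ‖ψ ξ‖ ^ 2) ∧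
  Integrable (fun ξ : ℝ => ‖ψ ξ‖ ^ 4)

/-- Membership in the unit-charge constraint manifold `Σ₁`. -/
def InSigma1 (ψ : ℝ → ℂ) : Prop := InX ψ ∧ (∫ ξ : ℝ, ‖ψ ξ‖ ^ 2) = 1

/-- The Gross–Pitaevskii energy functional. -/
noncomputable def energy (lam V₀ α : ℝ) (ψ : ℝ → ℂ) : ℝ :=
  (∫ ξ : ℝ, ‖deriv ψ ξ‖ ^ 2) + (∫ ξ : ℝ, ξ ^ 2 * ‖ψ ξ‖ ^ 2)
    + lam / 2 * (∫ ξ : ℝ, ‖ψ ξ‖ ^ 4)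
    - V₀ * (∫ ξ : ℝ, Real.cos (α * ξ) ^ 2 * ‖ψ ξ‖ ^ 2)

/-- The set of ground states. -/
def groundStates (lam V₀ α : ℝ) : Set (ℝ → ℂ) :=
  {ψ | InSigma1 ψ ∧ ∀ φ : ℝ → ℂ, InSigma1 φ → energy lam V₀ α ψ ≤ energy lam V₀ α φ}

open Filter Topology Set
open scoped Interval RealInnerProductSpace

/-!
Raised by a constant, the potential is continuous, nonnegative and tends to infinity at infinity.

A real minimizing sequence is equicontinuous and, because the potential confines it, converges
pointwise and in `L²` along a subsequence. Its energy norms converge too: for arbitrary `f`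
the minimality of the energy `m` on unit states reads
`m ‖f‖₂⁴ ≤ Q(f) ‖f‖₂² + (λ/2) ‖f‖₄⁴`, with `Q` the quadratic part of the energy, and applied to the
sum of two almost minimizers this bounds `Q` of their difference through the parallelogram identity.
The limit is a minimizer `u`, and so is `|u|` since `‖|ψ|'‖ ≤ ‖ψ'‖` (Kato). The Euler–Lagrange
equation is a linear ODE `u'' = P u` with continuous `P`, so a zero of `u ≥ 0` would be a double
zero and `u` would vanish identically; hence there is a positive minimizer `w`.

The energy is convex in the density. Given any other minimizer `ψ`, the pair `(ψ, w)/√2` is a state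
with values in a direct sum, its energy is at most the mean of the two energies, and its norm is the
square root of the mean density. Minimality forces equality in Kato's inequality for the pair, which
never vanishes, so its direction is constant. Thus `ψ` is a constant multiple of `w`. Applied to
the reflection of `w`, the same argument shows that `w` is even.
-/

section L2

variable {α E : Type*} [MeasurableSpace α] {μ : Measure α}
  [NormedAddCommGroup E] [InnerProductSpace ℝ E] {f g h : α → E}

lemma inner_toLp_eq_integral (hf : MemLp f 2 μ) (hh : MemLp h 2 μ) :
    ⟪hf.toLp f, hh.toLp h⟫ = ∫ x, ⟪f x, h x⟫ ∂μ := by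
  rw [L2.inner_def]
  refine integral_congr_ae ?_
  filter_upwards [hf.coeFn_toLp, hh.coeFn_toLp] with x hfx hhx
  rw [hfx, hhx]

lemma sq_norm_toLp_eq_integral (hf : MemLp f 2 μ) :
    ‖hf.toLp f‖ ^ 2 = ∫ x, ‖f x‖ ^ 2 ∂μ := by
  simp only [← real_inner_self_eq_norm_sq, inner_toLp_eq_integral]

lemma dist_toLp_eq_sqrt_integral (hf : MemLp f 2 μ) (hh : MemLp h 2 μ) :
    dist (hf.toLp f) (hh.toLp h) = √(∫ x, ‖f x - h x‖ ^ 2 ∂μ) := by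
  rw [dist_eq_norm, ← MemLp.toLp_sub hf hh, ← sqrt_sq (norm_nonneg _), sq_norm_toLp_eq_integral]
  rfl

lemma integral_norm_add_smul_sq (hf : MemLp f 2 μ) (hh : MemLp h 2 μ) (s : ℝ) :
    ∫ x, ‖f x + s • h x‖ ^ 2 ∂μ =
      (∫ x, ‖f x‖ ^ 2 ∂μ) + 2 * s * (∫ x, ⟪f x, h x⟫ ∂μ) + s ^ 2 * ∫ x, ‖h x‖ ^ 2 ∂μ := by
  have hsum := sq_norm_toLp_eq_integral (hf.add (hh.const_smul s))
  rw [MemLp.toLp_add hf (hh.const_smul s), MemLp.toLp_const_smul s hh, norm_add_sq_real,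
    norm_smul, inner_smul_right, mul_pow, norm_eq_abs, sq_abs, sq_norm_toLp_eq_integral,
    sq_norm_toLp_eq_integral, inner_toLp_eq_integral] at hsum
  calc ∫ x, ‖f x + s • h x‖ ^ 2 ∂μ = ∫ x, ‖(f + s • h) x‖ ^ 2 ∂μ := rfl
    _ = _ := by rw [← hsum]; ring

lemma integral_norm_sq_parallelogram (hf : MemLp f 2 μ) (hh : MemLp h 2 μ) :
    (∫ x, ‖f x + h x‖ ^ 2 ∂μ) + ∫ x, ‖f x - h x‖ ^ 2 ∂μ =
      2 * (∫ x, ‖f x‖ ^ 2 ∂μ) + 2 * ∫ x, ‖h x‖ ^ 2 ∂μ := by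
  have hadd := integral_norm_add_smul_sq hf hh 1
  have hsub := integral_norm_add_smul_sq hf hh (-1)
  simp only [one_smul, neg_one_smul, ← sub_eq_add_neg] at hadd hsub
  rw [hadd, hsub]
  ring

lemma tendsto_toLp {ι : Type*} {l : Filter ι} {φ : ι → α → E}
    (hφ : ∀ i, MemLp (φ i) 2 μ) (hf : MemLp f 2 μ)
    (hlim : Tendsto (fun i ↦ ∫ x, ‖φ i x - f x‖ ^ 2 ∂μ) l (𝓝 0)) :
    Tendsto (fun i ↦ (hφ i).toLp (φ i)) l (𝓝 (hf.toLp f)) := by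
  rw [tendsto_iff_dist_tendsto_zero]
  simpa only [dist_toLp_eq_sqrt_integral, sqrt_zero] using hlim.sqrt

lemma tendsto_integral_norm_sq {ι : Type*} {l : Filter ι} {φ : ι → α → E}
    (hφ : ∀ i, MemLp (φ i) 2 μ) (hf : MemLp f 2 μ)
    (hlim : Tendsto (fun i ↦ ∫ x, ‖φ i x - f x‖ ^ 2 ∂μ) l (𝓝 0)) :
    Tendsto (fun i ↦ ∫ x, ‖φ i x‖ ^ 2 ∂μ) l (𝓝 (∫ x, ‖f x‖ ^ 2 ∂μ)) := by
  simpa only [sq_norm_toLp_eq_integral] using (tendsto_toLp hφ hf hlim).norm.pow 2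

lemma exists_tendsto_of_cauchy_L2 [CompleteSpace E] {φ : ℕ → α → E} (hφ : ∀ n, MemLp (φ n) 2 μ)
    (hcau : Tendsto (fun p : ℕ × ℕ ↦ ∫ x, ‖φ p.1 x - φ p.2 x‖ ^ 2 ∂μ) atTop (𝓝 0)) :
    ∃ g, MemLp g 2 μ ∧ Tendsto (fun n ↦ ∫ x, ‖φ n x - g x‖ ^ 2 ∂μ) atTop (𝓝 0) := by
  have hcauchy : CauchySeq fun n ↦ (hφ n).toLp (φ n) := by
    rw [cauchySeq_iff_tendsto_dist_atTop_0]
    simpa only [dist_toLp_eq_sqrt_integral, sqrt_zero] using hcau.sqrt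
  obtain ⟨G, hG⟩ := cauchySeq_tendsto_of_complete hcauchy
  have hsq := (tendsto_iff_dist_tendsto_zero.1 hG).pow 2
  rw [← Lp.toLp_coeFn G (Lp.memLp G)] at hsq
  simp only [dist_toLp_eq_sqrt_integral, sq_sqrt (integral_nonneg fun _ ↦ sq_nonneg _),
    zero_pow two_ne_zero] at hsq
  exact ⟨G, Lp.memLp G, hsq⟩

lemma ae_eq_of_tendsto_L2_of_tendsto {φ : ℕ → α → E} (hφ : ∀ n, MemLp (φ n) 2 μ)
    (hg : MemLp g 2 μ) (hlim : Tendsto (fun n ↦ ∫ x, ‖φ n x - g x‖ ^ 2 ∂μ) atTop (𝓝 0))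
    (hpt : ∀ x, Tendsto (fun n ↦ φ n x) atTop (𝓝 (f x))) : g =ᵐ[μ] f := by
  obtain ⟨ns, hns, hae⟩ :=
    (tendstoInMeasure_of_tendsto_Lp (tendsto_toLp hφ hg hlim)).exists_seq_tendsto_ae
  filter_upwards [hae, hg.coeFn_toLp, ae_all_iff.2 fun n ↦ (hφ n).coeFn_toLp] with x hx hgx hφx
  simp only [hφx, hgx] at hx
  exact tendsto_nhds_unique hx ((hpt x).comp hns.tendsto_atTop)

lemma memLp_and_tendsto_of_cauchy_L2_of_tendsto [CompleteSpace E] {φ : ℕ → α → E}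
    (hφ : ∀ n, MemLp (φ n) 2 μ)
    (hcau : Tendsto (fun p : ℕ × ℕ ↦ ∫ x, ‖φ p.1 x - φ p.2 x‖ ^ 2 ∂μ) atTop (𝓝 0))
    (hpt : ∀ x, Tendsto (fun n ↦ φ n x) atTop (𝓝 (f x))) :
    MemLp f 2 μ ∧ Tendsto (fun n ↦ ∫ x, ‖φ n x - f x‖ ^ 2 ∂μ) atTop (𝓝 0) := by
  obtain ⟨g, hg, hlim⟩ := exists_tendsto_of_cauchy_L2 hφ hcau
  have hgf := ae_eq_of_tendsto_L2_of_tendsto hφ hg hlim hpt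
  refine ⟨hg.ae_eq hgf, hlim.congr fun n ↦ integral_congr_ae ?_⟩
  filter_upwards [hgf] with x hx
  rw [hx]

lemma sq_norm_integral_le {F : Type*} [NormedAddCommGroup F] [NormedSpace ℝ F] {f : α → F}
    [IsFiniteMeasure μ] (hf : MemLp f 2 μ) :
    ‖∫ x, f x ∂μ‖ ^ 2 ≤ μ.real univ * ∫ x, ‖f x‖ ^ 2 ∂μ := by
  have hone : MemLp (fun _ : α ↦ (1 : ℝ)) 2 μ := memLp_const 1
  have hinner : ∫ x, ‖f x‖ ∂μ = ⟪hone.toLp _, hf.norm.toLp _⟫ := by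
    simp only [inner_toLp_eq_integral, RCLike.inner_apply, map_one, mul_one]
  calc ‖∫ x, f x ∂μ‖ ^ 2 ≤ (∫ x, ‖f x‖ ∂μ) ^ 2 := by
        gcongr
        exact norm_integral_le_integral_norm f
    _ ≤ (‖hone.toLp _‖ * ‖hf.norm.toLp _‖) ^ 2 := by
        rw [hinner, sq_le_sq, abs_of_nonneg (by positivity : 0 ≤ ‖hone.toLp _‖ * _)]
        exact abs_real_inner_le_norm _ _
    _ = μ.real univ * ∫ x, ‖f x‖ ^ 2 ∂μ := by
        simp only [mul_pow, sq_norm_toLp_eq_integral, norm_one, one_pow, norm_norm, integral_const,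
          smul_eq_mul, mul_one]

end L2

lemma exists_subseq_tendsto_of_equicontinuous {X E : Type*} [TopologicalSpace X]
    [WeaklyLocallyCompactSpace X] [SigmaCompactSpace X] [MetricSpace E] [ProperSpace E]
    {φ : ℕ → X → E} (hφ : Equicontinuous φ)
    (hbdd : ∀ x, Bornology.IsBounded (range fun n ↦ φ n x)) :
    ∃ (f : X → E) (ns : ℕ → ℕ), StrictMono ns ∧
      ∀ x, Tendsto (fun n ↦ φ (ns n) x) atTop (𝓝 (f x)) := by
  let K : Set (X → E) := closure (range φ)
  have hK : IsCompact K := by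
    refine (isCompact_univ_pi fun x ↦ (hbdd x).isCompact_closure).of_isClosed_subset
      isClosed_closure (closure_minimal ?_ (isClosed_set_pi fun _ _ ↦ isClosed_closure))
    rintro _ ⟨n, rfl⟩ x -
    exact subset_closure ⟨n, rfl⟩
  have hKe : Equicontinuous ((↑) : K → X → E) := Equicontinuous.closure (by
    rwa [equicontinuous_iff_range] at hφ)
  let S : Set C(X, E) := {F | ⇑F ∈ K}
  have hS : IsCompact S := by
    refine ArzelaAscoli.isCompact_of_equicontinuous S ?_ ?_
    · convert! hK
      ext f
      exact ⟨fun ⟨_, hu, huf⟩ ↦ huf ▸ hu, fun hf ↦ ⟨⟨f, hKe.continuous ⟨f, hf⟩⟩, hf, rfl⟩⟩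
    · exact hKe.comp fun u : S ↦ (⟨u.1, u.2⟩ : K)
  obtain ⟨f, -, ns, hns, hf⟩ := hS.tendsto_subseq
    (x := fun n ↦ ⟨φ n, hφ.continuous n⟩) fun n ↦ subset_closure ⟨n, rfl⟩
  exact ⟨f, ns, hns, fun x ↦ ((ContinuousEvalConst.continuous_eval_const x).tendsto f).comp hf⟩

lemma intervalIntegrable_of_memLp_two {E : Type*} [NormedAddCommGroup E] {f : ℝ → E}
    (hf : MemLp f 2) (a b : ℝ) : IntervalIntegrable f volume a b :=
  ((hf.locallyIntegrable one_le_two).integrableOn_isCompact isCompact_uIcc).intervalIntegrable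

section H1

variable {E : Type*} [NormedAddCommGroup E] [NormedSpace ℝ E]

/-- `f` lies in the Sobolev space `H¹(ℝ)` and `g` is its weak derivative. The fundamental theorem
of calculus characterises the pair and selects the continuous representative of `f`. -/
structure IsH1Pair (f g : ℝ → E) : Prop where
  memLp : MemLp f 2
  memLp_deriv : MemLp g 2
  integral_eq_sub : ∀ a b : ℝ, ∫ x in a..b, g x = f b - f a

lemma sq_norm_intervalIntegral_le {g : ℝ → E} (hg : MemLp g 2) (a b : ℝ) :
    ‖∫ x in a..b, g x‖ ^ 2 ≤ |b - a| * ∫ x, ‖g x‖ ^ 2 := by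
  have hfin : IsFiniteMeasure (volume.restrict (Ι a b)) :=
    inferInstanceAs (IsFiniteMeasure (volume.restrict (Ioc _ _)))
  rw [intervalIntegral.norm_intervalIntegral_eq]
  calc ‖∫ x in Ι a b, g x‖ ^ 2 ≤ |b - a| * ∫ x in Ι a b, ‖g x‖ ^ 2 := by
        simpa [measureReal_def, uIoc, abs_sub_comm, max_sub_min_eq_abs] using
          sq_norm_integral_le (hg.restrict (Ι a b))
    _ ≤ |b - a| * ∫ x, ‖g x‖ ^ 2 := by
        gcongr
        · exact ae_of_all _ fun _ ↦ sq_nonneg _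
        · exact hg.norm.integrable_sq
        · exact Measure.restrict_le_self

namespace IsH1Pair

variable {f g h k : ℝ → E}

lemma add (hfg : IsH1Pair f g) (hhk : IsH1Pair h k) :
    IsH1Pair (fun x ↦ f x + h x) (fun x ↦ g x + k x) where
  memLp := hfg.memLp.add hhk.memLp
  memLp_deriv := hfg.memLp_deriv.add hhk.memLp_deriv
  integral_eq_sub a b := by
    rw [intervalIntegral.integral_add
      (intervalIntegrable_of_memLp_two hfg.memLp_deriv a b)
      (intervalIntegrable_of_memLp_two hhk.memLp_deriv a b),
      hfg.integral_eq_sub, hhk.integral_eq_sub]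
    abel

lemma const_smul (hfg : IsH1Pair f g) (c : ℝ) :
    IsH1Pair (fun x ↦ c • f x) (fun x ↦ c • g x) where
  memLp := hfg.memLp.const_smul c
  memLp_deriv := hfg.memLp_deriv.const_smul c
  integral_eq_sub a b := by
    rw [intervalIntegral.integral_smul, hfg.integral_eq_sub, smul_sub]

lemma of_differentiable [CompleteSpace E] (hd : Differentiable ℝ f) (hf : MemLp f 2)
    (hf' : MemLp (deriv f) 2) : IsH1Pair f (deriv f) where
  memLp := hf
  memLp_deriv := hf'
  integral_eq_sub a b := intervalIntegral.integral_deriv_eq_sub (fun x _ ↦ hd x)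
    (intervalIntegrable_of_memLp_two hf' a b)

lemma sq_norm_sub_le (hfg : IsH1Pair f g) (a b : ℝ) :
    ‖f b - f a‖ ^ 2 ≤ |b - a| * ∫ x, ‖g x‖ ^ 2 :=
  hfg.integral_eq_sub a b ▸ sq_norm_intervalIntegral_le hfg.memLp_deriv a b

lemma continuous (hfg : IsH1Pair f g) : Continuous f := by
  refine continuous_iff_continuousAt.2 fun a ↦ tendsto_iff_norm_sub_tendsto_zero.2 ?_
  have hlim : Tendsto (fun b ↦ √(|b - a| * ∫ x, ‖g x‖ ^ 2)) (𝓝 a) (𝓝 0) :=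
    Continuous.tendsto' (by fun_prop) _ _ (by simp)
  exact squeeze_zero (fun _ ↦ norm_nonneg _) (fun b ↦ le_sqrt_of_sq_le (hfg.sq_norm_sub_le a b))
    hlim

lemma sq_norm_le (hfg : IsH1Pair f g) (x : ℝ) :
    ‖f x‖ ^ 2 ≤ 2 * ((∫ y, ‖f y‖ ^ 2) + ∫ y, ‖g y‖ ^ 2) := by
  set G := ∫ y, ‖g y‖ ^ 2
  have hint := hfg.memLp.norm.integrable_sq
  have hpt : ∀ y ∈ Ioc x (x + 1), ‖f x‖ ^ 2 ≤ 2 * ‖f y‖ ^ 2 + 2 * G := fun y hy ↦ by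
    have hdist : ‖f x - f y‖ ^ 2 ≤ G := by
      refine (hfg.sq_norm_sub_le y x).trans (mul_le_of_le_one_left (by positivity) ?_)
      rw [abs_le]
      constructor <;> linarith [hy.1, hy.2]
    calc ‖f x‖ ^ 2 = ‖f y + (f x - f y)‖ ^ 2 := by rw [add_sub_cancel]
      _ ≤ (‖f y‖ + ‖f x - f y‖) ^ 2 := by gcongr; exact norm_add_le _ _
      _ ≤ 2 * ‖f y‖ ^ 2 + 2 * G := by nlinarith [sq_nonneg (‖f y‖ - ‖f x - f y‖)]
  calc ‖f x‖ ^ 2 = ∫ _ in Ioc x (x + 1), ‖f x‖ ^ 2 := by simp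
    _ ≤ ∫ y in Ioc x (x + 1), (2 * ‖f y‖ ^ 2 + 2 * G) :=
        setIntegral_mono_on (by simp)
          ((hint.const_mul 2).integrableOn.add (integrableOn_const (by simp))) measurableSet_Ioc hpt
    _ = 2 * (∫ y in Ioc x (x + 1), ‖f y‖ ^ 2) + 2 * G := by
        rw [integral_add (hint.const_mul 2).integrableOn (integrableOn_const (by simp)),
          integral_const_mul]
        simp
    _ ≤ 2 * ((∫ y, ‖f y‖ ^ 2) + G) := by
        linarith [setIntegral_le_integral (s := Ioc x (x + 1)) hint
          (ae_of_all _ fun _ ↦ sq_nonneg _)]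

lemma memLp_sq_norm (hfg : IsH1Pair f g) : MemLp (fun x ↦ ‖f x‖ ^ 2) 2 := by
  refine (hfg.memLp.norm.const_mul √(2 * ((∫ y, ‖f y‖ ^ 2) + ∫ y, ‖g y‖ ^ 2))).mono
    (hfg.continuous.norm.pow 2).aestronglyMeasurable (ae_of_all _ fun x ↦ ?_)
  rw [norm_mul, norm_pow, norm_norm, norm_eq_abs, abs_of_nonneg (sqrt_nonneg _), sq ‖f x‖]
  gcongr
  exact le_sqrt_of_sq_le (hfg.sq_norm_le x)

lemma integrable_norm_pow_four (hfg : IsH1Pair f g) : Integrable fun x ↦ ‖f x‖ ^ 4 := by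
  simpa only [← pow_mul] using hfg.memLp_sq_norm.integrable_sq

end IsH1Pair

lemma tendsto_integral_norm_pow_four {ι : Type*} {l : Filter ι} {φ φ' : ι → ℝ → E} {f g : ℝ → E}
    (hφ : ∀ i, IsH1Pair (φ i) (φ' i)) (hfg : IsH1Pair f g) {K : ℝ}
    (hK : ∀ i, (∫ x, ‖φ i x‖ ^ 2) + ∫ x, ‖φ' i x‖ ^ 2 ≤ K)
    (hlim : Tendsto (fun i ↦ ∫ x, ‖φ i x - f x‖ ^ 2) l (𝓝 0)) :
    Tendsto (fun i ↦ ∫ x, ‖φ i x‖ ^ 4) l (𝓝 (∫ x, ‖f x‖ ^ 4)) := by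
  set C := 4 * (K + ((∫ y, ‖f y‖ ^ 2) + ∫ y, ‖g y‖ ^ 2))
  have hpt : ∀ i x, ‖‖φ i x‖ ^ 2 - ‖f x‖ ^ 2‖ ^ 2 ≤ C * ‖φ i x - f x‖ ^ 2 := fun i x ↦ by
    have hsum : (‖φ i x‖ + ‖f x‖) ^ 2 ≤ C := by
      linarith [sq_nonneg (‖φ i x‖ - ‖f x‖), (hφ i).sq_norm_le x, hfg.sq_norm_le x, hK i]
    calc ‖‖φ i x‖ ^ 2 - ‖f x‖ ^ 2‖ ^ 2 = (‖φ i x‖ + ‖f x‖) ^ 2 * |‖φ i x‖ - ‖f x‖| ^ 2 := by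
          rw [norm_eq_abs, sq_abs, sq_abs]
          ring
      _ ≤ C * ‖φ i x - f x‖ ^ 2 := by
          gcongr
          · exact (sq_nonneg _).trans hsum
          · exact abs_norm_sub_norm_le (φ i x) (f x)
  have hint : ∀ i, Integrable fun x ↦ ‖φ i x - f x‖ ^ 2 := fun i ↦
    MemLp.integrable_sq ((hφ i).memLp.sub hfg.memLp).norm
  have hsq : Tendsto (fun i ↦ ∫ x, ‖‖φ i x‖ ^ 2 - ‖f x‖ ^ 2‖ ^ 2) l (𝓝 0) := by
    refine squeeze_zero (fun i ↦ integral_nonneg fun x ↦ sq_nonneg _) (fun i ↦ ?_)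
      (by simpa only [mul_zero] using hlim.const_mul C)
    rw [← integral_const_mul]
    exact integral_mono ((hφ i).memLp_sq_norm.sub hfg.memLp_sq_norm).norm.integrable_sq
      ((hint i).const_mul C) (hpt i)
  simpa only [norm_pow, norm_norm, ← pow_mul] using
    tendsto_integral_norm_sq (fun i ↦ (hφ i).memLp_sq_norm) hfg.memLp_sq_norm hsq

end H1

section Trap

/-- A trapping potential on the line: continuous, nonnegative and infinite at infinity. -/
structure IsTrap (W : ℝ → ℝ) : Prop where
  continuous : Continuous W
  nonneg : ∀ x, 0 ≤ W x
  tendsto_atTop : Tendsto W (cocompact ℝ) atTop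

/-- The measure `W(x) dx`, for which the potential energy of `f` is the squared `L²` norm of `f`. -/
noncomputable def potentialMeasure (W : ℝ → ℝ) : Measure ℝ :=
  volume.withDensity fun x ↦ ENNReal.ofReal (W x)

/-- `f` is a state of finite energy in the potential `W`, with weak derivative `g`. -/
structure IsFormPair {E : Type*} [NormedAddCommGroup E] [NormedSpace ℝ E] (W : ℝ → ℝ)
    (f g : ℝ → E) : Prop extends IsH1Pair f g where
  memLp_potential : MemLp f 2 (potentialMeasure W)

namespace IsTrap

variable {W : ℝ → ℝ}

lemma integral_potentialMeasure {F : Type*} [NormedAddCommGroup F] [NormedSpace ℝ F]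
    (hW : IsTrap W) (f : ℝ → F) :
    ∫ x, f x ∂potentialMeasure W = ∫ x, W x • f x := by
  refine (integral_withDensity_eq_integral_smul hW.continuous.measurable.real_toNNReal f).trans
    (integral_congr_ae (ae_of_all _ fun x ↦ ?_))
  simp only [NNReal.smul_def, coe_toNNReal _ (hW.nonneg x)]

lemma integrable_potentialMeasure_iff {F : Type*} [NormedAddCommGroup F] [NormedSpace ℝ F]
    (hW : IsTrap W) {f : ℝ → F} :
    Integrable f (potentialMeasure W) ↔ Integrable fun x ↦ W x • f x := by
  refine (integrable_withDensity_iff_integrable_smul hW.continuous.measurable.real_toNNReal).trans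
    (integrable_congr (ae_of_all _ fun x ↦ ?_))
  simp only [NNReal.smul_def, coe_toNNReal _ (hW.nonneg x)]

lemma memLp_potentialMeasure_iff {F : Type*} [NormedAddCommGroup F]
    (hW : IsTrap W) {f : ℝ → F} (hf : Continuous f) :
    MemLp f 2 (potentialMeasure W) ↔ Integrable fun x ↦ W x * ‖f x‖ ^ 2 := by
  rw [memLp_two_iff_integrable_sq_norm hf.aestronglyMeasurable, hW.integrable_potentialMeasure_iff]
  rfl

end IsTrap

namespace IsFormPair

variable {E : Type*} [NormedAddCommGroup E] [NormedSpace ℝ E] {W : ℝ → ℝ} {f g h k : ℝ → E}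

lemma add (hfg : IsFormPair W f g) (hhk : IsFormPair W h k) :
    IsFormPair W (fun x ↦ f x + h x) (fun x ↦ g x + k x) where
  toIsH1Pair := hfg.toIsH1Pair.add hhk.toIsH1Pair
  memLp_potential := hfg.memLp_potential.add hhk.memLp_potential

lemma const_smul (hfg : IsFormPair W f g) (c : ℝ) :
    IsFormPair W (fun x ↦ c • f x) (fun x ↦ c • g x) where
  toIsH1Pair := hfg.toIsH1Pair.const_smul c
  memLp_potential := hfg.memLp_potential.const_smul c

end IsFormPair

end Trap

section Energy

variable {E : Type*} [NormedAddCommGroup E] {W : ℝ → ℝ} {lam : ℝ}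

/-- The quadratic part `∫ ‖f'‖² + ∫ W ‖f‖²` of the energy, where `g` stands for `f'`. -/
noncomputable def trapEnergy (W : ℝ → ℝ) (f g : ℝ → E) : ℝ :=
  (∫ x, ‖g x‖ ^ 2) + ∫ x, ‖f x‖ ^ 2 ∂potentialMeasure W

/-- The Gross–Pitaevskii energy `∫ ‖f'‖² + ∫ W ‖f‖² + (λ/2) ∫ ‖f‖⁴`, where `g` stands for `f'`. -/
noncomputable def gpEnergy (W : ℝ → ℝ) (lam : ℝ) (f g : ℝ → E) : ℝ :=
  trapEnergy W f g + lam / 2 * ∫ x, ‖f x‖ ^ 4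

lemma trapEnergy_nonneg (W : ℝ → ℝ) (f g : ℝ → E) : 0 ≤ trapEnergy W f g :=
  add_nonneg (integral_nonneg fun _ ↦ sq_nonneg _) (integral_nonneg fun _ ↦ sq_nonneg _)

lemma trapEnergy_le_gpEnergy (hlam : 0 ≤ lam) (W : ℝ → ℝ) (f g : ℝ → E) :
    trapEnergy W f g ≤ gpEnergy W lam f g :=
  le_add_of_nonneg_right (mul_nonneg (by positivity) (integral_nonneg fun _ ↦ by positivity))

lemma gpEnergy_nonneg (hlam : 0 ≤ lam) (W : ℝ → ℝ) (f g : ℝ → E) : 0 ≤ gpEnergy W lam f g :=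
  (trapEnergy_nonneg W f g).trans (trapEnergy_le_gpEnergy hlam W f g)

lemma integral_norm_add_pow_four_le {f h : ℝ → E} (hf : Integrable fun x ↦ ‖f x‖ ^ 4)
    (hh : Integrable fun x ↦ ‖h x‖ ^ 4) :
    ∫ x, ‖f x + h x‖ ^ 4 ≤ 8 * ((∫ x, ‖f x‖ ^ 4) + ∫ x, ‖h x‖ ^ 4) := by
  rw [← integral_add hf hh, ← integral_const_mul]
  refine integral_mono_of_nonneg (ae_of_all _ fun x ↦ by positivity) ((hf.add hh).const_mul 8)
    (ae_of_all _ fun x ↦ ?_)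
  calc ‖f x + h x‖ ^ 4 ≤ (‖f x‖ + ‖h x‖) ^ 4 := by gcongr; exact norm_add_le _ _
    _ ≤ 2 ^ (4 - 1) * (‖f x‖ ^ 4 + ‖h x‖ ^ 4) := add_pow_le (norm_nonneg _) (norm_nonneg _) 4
    _ = 8 * (‖f x‖ ^ 4 + ‖h x‖ ^ 4) := by norm_num

variable [NormedSpace ℝ E]

/-- A state of finite energy and unit mass in the potential `W`, with weak derivative `g`. -/
structure IsUnitPair (W : ℝ → ℝ) (f g : ℝ → E) : Prop extends IsFormPair W f g where
  integral_eq_one : ∫ x, ‖f x‖ ^ 2 = 1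

lemma IsFormPair.isUnitPair_inv_sqrt_smul {f g : ℝ → E} (hfg : IsFormPair W f g)
    (hpos : 0 < ∫ x, ‖f x‖ ^ 2) :
    IsUnitPair W (fun x ↦ (√(∫ y, ‖f y‖ ^ 2))⁻¹ • f x) fun x ↦ (√(∫ y, ‖f y‖ ^ 2))⁻¹ • g x where
  toIsFormPair := hfg.const_smul _
  integral_eq_one := by
    simp only [norm_smul, mul_pow, norm_inv, norm_eq_abs, sq_abs, inv_pow, integral_const_mul,
      sq_sqrt hpos.le, inv_mul_cancel₀ hpos.ne']

lemma trapEnergy_const_smul (W : ℝ → ℝ) (f g : ℝ → E) (c : ℝ) :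
    trapEnergy W (fun x ↦ c • f x) (fun x ↦ c • g x) = c ^ 2 * trapEnergy W f g := by
  simp only [trapEnergy, norm_smul, mul_pow, norm_eq_abs, sq_abs, integral_const_mul, mul_add]

end Energy

section EnergyForm

variable {E : Type*} [NormedAddCommGroup E] [InnerProductSpace ℝ E] {W : ℝ → ℝ} {f g h k : ℝ → E}

/-- The bilinear form whose diagonal is `trapEnergy`. -/
noncomputable def trapForm (W : ℝ → ℝ) (f g h k : ℝ → E) : ℝ :=
  (∫ x, ⟪g x, k x⟫) + ∫ x, ⟪f x, h x⟫ ∂potentialMeasure W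

lemma IsFormPair.trapEnergy_parallelogram (hfg : IsFormPair W f g) (hhk : IsFormPair W h k) :
    trapEnergy W (fun x ↦ f x + h x) (fun x ↦ g x + k x) +
      trapEnergy W (fun x ↦ f x - h x) (fun x ↦ g x - k x) =
      2 * trapEnergy W f g + 2 * trapEnergy W h k := by
  have hkin := integral_norm_sq_parallelogram hfg.memLp_deriv hhk.memLp_deriv
  have hpot := integral_norm_sq_parallelogram hfg.memLp_potential hhk.memLp_potential
  simp only [trapEnergy]
  linarith

end EnergyForm

section GroundEnergy

variable {W : ℝ → ℝ} {lam : ℝ} {f g h k : ℝ → ℝ}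

/-- The energies of the real states of unit mass. Weakly differentiable states are included, so
that limits of minimizing sequences are admissible. -/
def unitEnergies (W : ℝ → ℝ) (lam : ℝ) : Set ℝ :=
  {e | ∃ f g : ℝ → ℝ, IsUnitPair W f g ∧ gpEnergy W lam f g = e}

/-- The minimal energy of a state of unit mass. Real states suffice: by Kato's inequality, passing
from a vector-valued state to its norm does not raise the energy. -/
noncomputable def groundEnergy (W : ℝ → ℝ) (lam : ℝ) : ℝ :=
  sInf (unitEnergies W lam)

lemma groundEnergy_nonneg (hlam : 0 ≤ lam) (W : ℝ → ℝ) : 0 ≤ groundEnergy W lam := by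
  refine sInf_nonneg ?_
  rintro _ ⟨f, g, -, rfl⟩
  exact gpEnergy_nonneg hlam W f g

lemma bddBelow_unitEnergies (hlam : 0 ≤ lam) (W : ℝ → ℝ) :
    BddBelow (unitEnergies W lam) := by
  refine ⟨0, ?_⟩
  rintro _ ⟨f, g, -, rfl⟩
  exact gpEnergy_nonneg hlam W f g

lemma IsUnitPair.groundEnergy_le (hlam : 0 ≤ lam) (hfg : IsUnitPair W f g) :
    groundEnergy W lam ≤ gpEnergy W lam f g :=
  csInf_le (bddBelow_unitEnergies hlam W) ⟨f, g, hfg, rfl⟩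

lemma IsFormPair.groundEnergy_mul_sq_le (hlam : 0 ≤ lam) (hfg : IsFormPair W f g) :
    groundEnergy W lam * (∫ x, ‖f x‖ ^ 2) ^ 2 ≤
      trapEnergy W f g * (∫ x, ‖f x‖ ^ 2) + lam / 2 * ∫ x, ‖f x‖ ^ 4 := by
  have hunit := hfg.isUnitPair_inv_sqrt_smul
  have hM_nonneg : 0 ≤ ∫ x, ‖f x‖ ^ 2 := integral_nonneg fun _ ↦ sq_nonneg _
  generalize ∫ x, ‖f x‖ ^ 2 = M at hM_nonneg hunit ⊢
  rcases hM_nonneg.eq_or_lt with rfl | hM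
  · rw [zero_pow two_ne_zero, mul_zero, mul_zero, zero_add]
    exact mul_nonneg (by positivity) (integral_nonneg fun _ ↦ by positivity)
  have hc : (√M)⁻¹ ^ 2 = M⁻¹ := by rw [inv_pow, sq_sqrt hM.le]
  have hle := (hunit hM).groundEnergy_le hlam
  have hquart : ∫ x, ‖(√M)⁻¹ • f x‖ ^ 4 = M⁻¹ ^ 2 * ∫ x, ‖f x‖ ^ 4 := by
    simp only [norm_smul, mul_pow, integral_const_mul, norm_inv, norm_of_nonneg (sqrt_nonneg _),
      ← hc, ← pow_mul]
  rw [gpEnergy, trapEnergy_const_smul, hc, hquart] at hle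
  calc groundEnergy W lam * M ^ 2
      ≤ (M⁻¹ * trapEnergy W f g + lam / 2 * (M⁻¹ ^ 2 * ∫ x, ‖f x‖ ^ 4)) * M ^ 2 := by gcongr
    _ = trapEnergy W f g * M + lam / 2 * ∫ x, ‖f x‖ ^ 4 := by
        have := hM.ne'
        field_simp

lemma IsUnitPair.trapEnergy_sub_le (hlam : 0 ≤ lam) (hfg : IsUnitPair W f g)
    (hhk : IsUnitPair W h k) :
    trapEnergy W (fun x ↦ f x - h x) (fun x ↦ g x - k x) ≤
      2 * (gpEnergy W lam f g - groundEnergy W lam) + 2 * (gpEnergy W lam h k - groundEnergy W lam)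
        + 2 * groundEnergy W lam * ∫ x, ‖f x - h x‖ ^ 2 := by
  have hmin := (hfg.toIsFormPair.add hhk.toIsFormPair).groundEnergy_mul_sq_le hlam
  have hmass := integral_norm_sq_parallelogram hfg.memLp hhk.memLp
  have htrap := hfg.toIsFormPair.trapEnergy_parallelogram hhk.toIsFormPair
  have hquart := mul_le_mul_of_nonneg_left (integral_norm_add_pow_four_le
    hfg.integrable_norm_pow_four hhk.integrable_norm_pow_four) hlam
  have hsum := trapEnergy_nonneg W (fun x ↦ f x + h x) (fun x ↦ g x + k x)
  have hm := groundEnergy_nonneg hlam W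
  have hδ : 0 ≤ ∫ x, ‖f x - h x‖ ^ 2 := integral_nonneg fun _ ↦ sq_nonneg _
  rw [hfg.integral_eq_one, hhk.integral_eq_one] at hmass
  rw [eq_sub_of_add_eq hmass] at hmin
  unfold gpEnergy
  nlinarith [mul_nonneg hδ hsum, mul_nonneg hm (sq_nonneg (∫ x, ‖f x - h x‖ ^ 2))]

end GroundEnergy

section Compactness

variable {E : Type*} [NormedAddCommGroup E] {W : ℝ → ℝ}

lemma IsTrap.integral_norm_sq_le (hW : IsTrap W) {f : ℝ → E} (hf : MemLp f 2)
    (hfW : MemLp f 2 (potentialMeasure W)) {S : Set ℝ} (hS : MeasurableSet S) {c : ℝ} (hc : 0 < c)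
    (hcW : ∀ x ∉ S, c ≤ W x) :
    ∫ x, ‖f x‖ ^ 2 ≤ (∫ x in S, ‖f x‖ ^ 2) + c⁻¹ * ∫ x, ‖f x‖ ^ 2 ∂potentialMeasure W := by
  have hint := hf.norm.integrable_sq
  have hintW := hW.integrable_potentialMeasure_iff.1 hfW.norm.integrable_sq
  simp only [smul_eq_mul] at hintW
  rw [← integral_add_compl hS hint, hW.integral_potentialMeasure, ← integral_const_mul]
  gcongr
  calc ∫ x in Sᶜ, ‖f x‖ ^ 2 ≤ ∫ x in Sᶜ, c⁻¹ * (W x * ‖f x‖ ^ 2) := by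
        refine setIntegral_mono_on hint.integrableOn (hintW.const_mul _).integrableOn hS.compl
          fun x hx ↦ ?_
        rw [← mul_assoc, inv_mul_eq_div]
        exact le_mul_of_one_le_left (sq_nonneg _) ((one_le_div hc).2 (hcW x hx))
    _ ≤ ∫ x, c⁻¹ * (W x * ‖f x‖ ^ 2) :=
        setIntegral_le_integral (hintW.const_mul _) (ae_of_all _ fun x ↦
          mul_nonneg (inv_nonneg.2 hc.le) (mul_nonneg (hW.nonneg x) (sq_nonneg _)))

lemma IsTrap.tendsto_integral_norm_sq_zero (hW : IsTrap W) {ι : Type*} {l : Filter ι}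
    [l.IsCountablyGenerated] {d : ι → ℝ → E} {C K : ℝ} (hd : ∀ i, MemLp (d i) 2)
    (hdW : ∀ i, MemLp (d i) 2 (potentialMeasure W)) (hC : ∀ i x, ‖d i x‖ ^ 2 ≤ C)
    (hK : ∀ i, ∫ x, ‖d i x‖ ^ 2 ∂potentialMeasure W ≤ K)
    (hlim : ∀ x, Tendsto (fun i ↦ d i x) l (𝓝 0)) :
    Tendsto (fun i ↦ ∫ x, ‖d i x‖ ^ 2) l (𝓝 0) := by
  refine tendsto_order.2 ⟨fun a ha ↦ Eventually.of_forall fun i ↦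
    ha.trans_le (integral_nonneg fun _ ↦ sq_nonneg _), fun ε hε ↦ ?_⟩
  obtain ⟨c, hc, hcK⟩ : ∃ c : ℝ, 0 < c ∧ c⁻¹ * K < ε / 2 :=
    ((eventually_gt_atTop 0).and ((tendsto_inv_atTop_zero.mul_const K).eventually_lt_const
      (by rw [zero_mul]; positivity))).exists
  obtain ⟨S, hS, hSW⟩ := mem_cocompact.1 (hW.tendsto_atTop.eventually_ge_atTop c)
  have hlocal : Tendsto (fun i ↦ ∫ x in S, ‖d i x‖ ^ 2) l (𝓝 0) := by
    have hdom := tendsto_integral_filter_of_dominated_convergence (μ := volume.restrict S)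
      (F := fun i x ↦ ‖d i x‖ ^ 2) (f := fun _ ↦ (0 : ℝ)) (l := l) (fun _ ↦ C)
      (Eventually.of_forall fun i ↦ ((hd i).aestronglyMeasurable.norm.pow 2).restrict)
      (Eventually.of_forall fun i ↦ ae_of_all _ fun x ↦ by
        simpa only [norm_pow, norm_norm] using hC i x)
      (integrableOn_const hS.measure_lt_top.ne)
      (ae_of_all _ fun x ↦ by simpa using (hlim x).norm.pow 2)
    simpa only [integral_zero] using hdom
  filter_upwards [hlocal.eventually_lt_const (half_pos hε)] with i hi
  calc ∫ x, ‖d i x‖ ^ 2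
      ≤ (∫ x in S, ‖d i x‖ ^ 2) + c⁻¹ * ∫ x, ‖d i x‖ ^ 2 ∂potentialMeasure W :=
        hW.integral_norm_sq_le (hd i) (hdW i) hS.isClosed.measurableSet hc
          fun x hx ↦ hSW hx
    _ ≤ (∫ x in S, ‖d i x‖ ^ 2) + c⁻¹ * K := by gcongr; exact hK i
    _ < ε := by linarith

variable [NormedSpace ℝ E]

lemma exists_subseq_tendsto_of_isH1Pair [ProperSpace E] {φ φ' : ℕ → ℝ → E}
    (hφ : ∀ n, IsH1Pair (φ n) (φ' n)) {K : ℝ}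
    (hK : ∀ n, (∫ x, ‖φ n x‖ ^ 2) + ∫ x, ‖φ' n x‖ ^ 2 ≤ K) :
    ∃ (u : ℝ → E) (ns : ℕ → ℕ), StrictMono ns ∧
      ∀ x, Tendsto (fun n ↦ φ (ns n) x) atTop (𝓝 (u x)) := by
  have hmass : ∀ n, 0 ≤ ∫ x, ‖φ n x‖ ^ 2 := fun n ↦ integral_nonneg fun _ ↦ sq_nonneg _
  refine exists_subseq_tendsto_of_equicontinuous ?_ fun x ↦ ?_
  · refine Metric.equicontinuous_of_continuity_modulus (fun r ↦ √(r * K))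
      (Continuous.tendsto' (by fun_prop) _ _ (by simp)) φ fun x y n ↦ ?_
    rw [dist_eq_norm, dist_eq]
    refine le_sqrt_of_sq_le (((hφ n).sq_norm_sub_le y x).trans ?_)
    gcongr
    linarith [hK n, hmass n]
  · refine (isBounded_iff_forall_norm_le).2 ⟨√(2 * K), ?_⟩
    rintro _ ⟨n, rfl⟩
    exact le_sqrt_of_sq_le (((hφ n).sq_norm_le x).trans (by linarith [hK n]))

lemma IsH1Pair.of_tendsto {φ φ' : ℕ → ℝ → E} {u v : ℝ → E}
    (hφ : ∀ n, IsH1Pair (φ n) (φ' n)) (hu : MemLp u 2) (hv : MemLp v 2)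
    (hpt : ∀ x, Tendsto (fun n ↦ φ n x) atTop (𝓝 (u x)))
    (hlim : Tendsto (fun n ↦ ∫ x, ‖φ' n x - v x‖ ^ 2) atTop (𝓝 0)) : IsH1Pair u v where
  memLp := hu
  memLp_deriv := hv
  integral_eq_sub a b := by
    have hsq : Tendsto (fun n ↦ ‖(∫ x in a..b, φ' n x) - ∫ x in a..b, v x‖ ^ 2) atTop (𝓝 0) := by
      refine squeeze_zero (fun _ ↦ sq_nonneg _) (fun n ↦ ?_)
        (by simpa only [mul_zero] using hlim.const_mul |b - a|)
      rw [← intervalIntegral.integral_sub (intervalIntegrable_of_memLp_two (hφ n).memLp_deriv a b)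
        (intervalIntegrable_of_memLp_two hv a b)]
      exact sq_norm_intervalIntegral_le ((hφ n).memLp_deriv.sub hv) a b
    have hint : Tendsto (fun n ↦ ∫ x in a..b, φ' n x) atTop (𝓝 (∫ x in a..b, v x)) := by
      rw [tendsto_iff_norm_sub_tendsto_zero]
      simpa only [sqrt_sq (norm_nonneg _), sqrt_zero] using hsq.sqrt
    simp only [(hφ _).integral_eq_sub] at hint
    exact tendsto_nhds_unique hint ((hpt b).sub (hpt a))

end Compactness

section Minimizer

variable {E : Type*} [NormedAddCommGroup E] [InnerProductSpace ℝ E] {W : ℝ → ℝ} {lam : ℝ}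

lemma exists_isFormPair_of_cauchy [CompleteSpace E] {φ φ' : ℕ → ℝ → E} {u : ℝ → E}
    (hφ : ∀ n, IsFormPair W (φ n) (φ' n))
    (hpt : ∀ x, Tendsto (fun n ↦ φ n x) atTop (𝓝 (u x)))
    (hmass : Tendsto (fun p : ℕ × ℕ ↦ ∫ x, ‖φ p.1 x - φ p.2 x‖ ^ 2) atTop (𝓝 0))
    (htrap : Tendsto (fun p : ℕ × ℕ ↦ trapEnergy W (fun x ↦ φ p.1 x - φ p.2 x)
      (fun x ↦ φ' p.1 x - φ' p.2 x)) atTop (𝓝 0)) :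
    ∃ v, IsFormPair W u v ∧ Tendsto (fun n ↦ ∫ x, ‖φ n x - u x‖ ^ 2) atTop (𝓝 0) ∧
      Tendsto (fun n ↦ ∫ x, ‖φ' n x - v x‖ ^ 2) atTop (𝓝 0) ∧
      Tendsto (fun n ↦ ∫ x, ‖φ n x - u x‖ ^ 2 ∂potentialMeasure W) atTop (𝓝 0) := by
  obtain ⟨hu, hu_lim⟩ := memLp_and_tendsto_of_cauchy_L2_of_tendsto (fun n ↦ (hφ n).memLp) hmass hpt
  obtain ⟨huW, huW_lim⟩ := memLp_and_tendsto_of_cauchy_L2_of_tendsto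
    (fun n ↦ (hφ n).memLp_potential) (squeeze_zero (fun _ ↦ integral_nonneg fun _ ↦ sq_nonneg _)
      (fun _ ↦ le_add_of_nonneg_left (integral_nonneg fun _ ↦ sq_nonneg _)) htrap) hpt
  obtain ⟨v, hv, hv_lim⟩ := exists_tendsto_of_cauchy_L2 (fun n ↦ (hφ n).memLp_deriv)
    (squeeze_zero (fun _ ↦ integral_nonneg fun _ ↦ sq_nonneg _)
      (fun _ ↦ le_add_of_nonneg_right (integral_nonneg fun _ ↦ sq_nonneg _)) htrap)
  exact ⟨v, ⟨.of_tendsto (fun n ↦ (hφ n).toIsH1Pair) hu hv hpt hv_lim, huW⟩, hu_lim, hv_lim,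
    huW_lim⟩

lemma IsTrap.tendsto_integral_norm_sub_sq_zero (hW : IsTrap W) {φ φ' : ℕ → ℝ → E} {u : ℝ → E}
    (hφ : ∀ n, IsUnitPair W (φ n) (φ' n)) {K : ℝ} (hK : ∀ n, trapEnergy W (φ n) (φ' n) ≤ K)
    (hpt : ∀ x, Tendsto (fun n ↦ φ n x) atTop (𝓝 (u x))) :
    Tendsto (fun p : ℕ × ℕ ↦ ∫ x, ‖φ p.1 x - φ p.2 x‖ ^ 2) atTop (𝓝 0) := by
  have hkin : ∀ n, ∫ x, ‖φ' n x‖ ^ 2 ≤ K := fun n ↦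
    (le_add_of_nonneg_right (integral_nonneg fun _ ↦ sq_nonneg _)).trans (hK n)
  have hpot : ∀ n, ∫ x, ‖φ n x‖ ^ 2 ∂potentialMeasure W ≤ K := fun n ↦
    (le_add_of_nonneg_left (integral_nonneg fun _ ↦ sq_nonneg _)).trans (hK n)
  refine hW.tendsto_integral_norm_sq_zero (C := 8 * (1 + K)) (K := 4 * K)
    (fun p ↦ (hφ p.1).memLp.sub (hφ p.2).memLp)
    (fun p ↦ (hφ p.1).memLp_potential.sub (hφ p.2).memLp_potential) (fun p x ↦ ?_) (fun p ↦ ?_)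
    fun x ↦ ?_
  · have hsup : ∀ n, ‖φ n x‖ ^ 2 ≤ 2 * (1 + K) := fun n ↦ by
      linarith [(hφ n).sq_norm_le x, (hφ n).integral_eq_one, hkin n]
    linarith [parallelogram_law_with_norm ℝ (φ p.1 x) (φ p.2 x), hsup p.1, hsup p.2,
      sq_nonneg ‖φ p.1 x + φ p.2 x‖]
  · linarith [integral_norm_sq_parallelogram (hφ p.1).memLp_potential (hφ p.2).memLp_potential,
      hpot p.1, hpot p.2, (integral_nonneg fun _ ↦ sq_nonneg _ :
        0 ≤ ∫ x, ‖φ p.1 x + φ p.2 x‖ ^ 2 ∂potentialMeasure W)]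
  · rw [← prod_atTop_atTop_eq]
    simpa only [sub_self, Function.comp_def] using
      ((hpt x).comp tendsto_fst).sub ((hpt x).comp tendsto_snd)

/-- Any minimizing sequence converges because the parallelogram identity and the homogeneous form
of the variational problem bound `trapEnergy` of a difference by the energy excess and the mass of
the difference. -/
lemma IsTrap.exists_minimizer_of_tendsto (hW : IsTrap W) (hlam : 0 ≤ lam) {φ φ' : ℕ → ℝ → ℝ}
    (hφ : ∀ n, IsUnitPair W (φ n) (φ' n))
    (hmin : Tendsto (fun n ↦ gpEnergy W lam (φ n) (φ' n)) atTop (𝓝 (groundEnergy W lam))) :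
    ∃ u v : ℝ → ℝ, IsUnitPair W u v ∧ gpEnergy W lam u v = groundEnergy W lam := by
  obtain ⟨K, hK⟩ := hmin.bddAbove_range
  have htrapK : ∀ n, trapEnergy W (φ n) (φ' n) ≤ K := fun n ↦
    (trapEnergy_le_gpEnergy hlam W _ _).trans (hK ⟨n, rfl⟩)
  have hH1K : ∀ n, (∫ x, ‖φ n x‖ ^ 2) + ∫ x, ‖φ' n x‖ ^ 2 ≤ 1 + K := fun n ↦
    add_le_add (hφ n).integral_eq_one.le
      ((le_add_of_nonneg_right (integral_nonneg fun _ ↦ sq_nonneg _)).trans (htrapK n))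
  obtain ⟨u, ns, hns, hpt⟩ := exists_subseq_tendsto_of_isH1Pair (fun n ↦ (hφ n).toIsH1Pair) hH1K
  have hmass := hW.tendsto_integral_norm_sub_sq_zero (fun n ↦ hφ (ns n)) (fun n ↦ htrapK (ns n))
    hpt
  have hexcess : Tendsto (fun n ↦ 2 * (gpEnergy W lam (φ (ns n)) (φ' (ns n)) -
      groundEnergy W lam)) atTop (𝓝 0) := by
    simpa using ((hmin.comp hns.tendsto_atTop).sub_const (groundEnergy W lam)).const_mul 2
  have htrap : Tendsto (fun p : ℕ × ℕ ↦ trapEnergy W (fun x ↦ φ (ns p.1) x - φ (ns p.2) x)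
      (fun x ↦ φ' (ns p.1) x - φ' (ns p.2) x)) atTop (𝓝 0) := by
    rw [← prod_atTop_atTop_eq] at hmass ⊢
    refine squeeze_zero (fun _ ↦ trapEnergy_nonneg _ _ _)
      (fun p ↦ (hφ (ns p.1)).trapEnergy_sub_le hlam (hφ (ns p.2))) ?_
    simpa using ((hexcess.comp tendsto_fst).add (hexcess.comp tendsto_snd)).add
      (hmass.const_mul (2 * groundEnergy W lam))
  obtain ⟨v, huv, hu_lim, hv_lim, huW_lim⟩ :=
    exists_isFormPair_of_cauchy (fun n ↦ (hφ (ns n)).toIsFormPair) hpt hmass htrap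
  have hone := tendsto_integral_norm_sq (fun n ↦ (hφ (ns n)).memLp) huv.memLp hu_lim
  simp only [(hφ _).integral_eq_one] at hone
  refine ⟨u, v, ⟨huv, tendsto_nhds_unique hone tendsto_const_nhds⟩, ?_⟩
  refine tendsto_nhds_unique (((tendsto_integral_norm_sq (fun n ↦ (hφ (ns n)).memLp_deriv)
    huv.memLp_deriv hv_lim).add (tendsto_integral_norm_sq (fun n ↦ (hφ (ns n)).memLp_potential)
    huv.memLp_potential huW_lim)).add ((tendsto_integral_norm_pow_four
    (fun n ↦ (hφ (ns n)).toIsH1Pair) huv.toIsH1Pair (fun n ↦ hH1K (ns n)) hu_lim).const_mul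
    (lam / 2))) (hmin.comp hns.tendsto_atTop)

end Minimizer

section EulerLagrange

lemma hasDerivAt_add_mul_add_sq_mul_zero (a b c : ℝ) :
    HasDerivAt (fun s ↦ a + 2 * s * b + s ^ 2 * c) (2 * b) 0 :=
  (((((hasDerivAt_id 0).const_mul 2).mul_const b).const_add a).add
    ((hasDerivAt_pow 2 0).mul_const c)).congr_deriv (by simp)

lemma hasDerivAt_integral_norm_add_smul_sq {α E : Type*} {m : MeasurableSpace α} {μ : Measure α}
    [NormedAddCommGroup E] [InnerProductSpace ℝ E] {f h : α → E} (hf : MemLp f 2 μ)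
    (hh : MemLp h 2 μ) :
    HasDerivAt (fun s : ℝ ↦ ∫ x, ‖f x + s • h x‖ ^ 2 ∂μ) (2 * ∫ x, ⟪f x, h x⟫ ∂μ) 0 := by
  simpa only [integral_norm_add_smul_sq hf hh] using hasDerivAt_add_mul_add_sq_mul_zero _ _ _

lemma IsFormPair.hasDerivAt_trapEnergy {E : Type*} [NormedAddCommGroup E] [InnerProductSpace ℝ E]
    {W : ℝ → ℝ} {f g h k : ℝ → E} (hfg : IsFormPair W f g) (hhk : IsFormPair W h k) :
    HasDerivAt (fun s : ℝ ↦ trapEnergy W (fun x ↦ f x + s • h x) fun x ↦ g x + s • k x)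
      (2 * trapForm W f g h k) 0 :=
  ((hasDerivAt_integral_norm_add_smul_sq hfg.memLp_deriv hhk.memLp_deriv).add
    (hasDerivAt_integral_norm_add_smul_sq hfg.memLp_potential hhk.memLp_potential)).congr_deriv
      (mul_add _ _ _).symm

variable {W u v η : ℝ → ℝ} {lam : ℝ}

lemma hasDerivAt_integral_add_mul_pow (n : ℕ) (hu : Continuous u)
    (hun : Integrable fun x ↦ u x ^ n) (hη : Continuous η) (hc : HasCompactSupport η) :
    HasDerivAt (fun s ↦ ∫ x, (u x + s * η x) ^ n) (n * ∫ x, u x ^ (n - 1) * η x) 0 := by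
  have hterm : ∀ i, Integrable fun x ↦ η x ^ i * u x ^ (n - i) := fun i ↦ by
    rcases eq_or_ne i 0 with rfl | hi
    · simpa only [pow_zero, one_mul, Nat.sub_zero] using hun
    · exact ((hη.pow i).mul (hu.pow _)).integrable_of_hasCompactSupport
        (hc.comp_left (g := (· ^ i)) (zero_pow hi)).mul_right
  have hexp : ∀ s : ℝ, ∫ x, (u x + s * η x) ^ n =
      ∑ i ∈ Finset.range (n + 1), (n.choose i * ∫ x, η x ^ i * u x ^ (n - i)) * s ^ i := fun s ↦ by
    simp_rw [add_comm (u _), add_pow, ← integral_const_mul, ← integral_mul_const]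
    rw [← integral_finsetSum _ fun i _ ↦ ((hterm i).const_mul _).mul_const _]
    refine integral_congr_ae (ae_of_all _ fun x ↦ Finset.sum_congr rfl fun i _ ↦ ?_)
    ring
  simp_rw [hexp]
  refine (HasDerivAt.fun_sum fun i _ ↦ (hasDerivAt_pow i (0 : ℝ)).const_mul _).congr_deriv ?_
  rw [Finset.sum_eq_single 1]
  · simp [mul_comm]
  · intro i _ hi
    rcases eq_or_ne i 0 with rfl | hi0
    · simp
    · simp [Nat.sub_ne_zero_of_lt (by omega : 1 < i)]
  · intro h
    simp_all

lemma IsTrap.isFormPair_of_hasCompactSupport (hW : IsTrap W) (hη : ContDiff ℝ 1 η)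
    (hc : HasCompactSupport η) : IsFormPair W η (deriv η) where
  toIsH1Pair := .of_differentiable (hη.differentiable one_ne_zero)
    (hη.continuous.memLp_of_hasCompactSupport hc)
    ((hη.continuous_deriv le_rfl).memLp_of_hasCompactSupport hc.deriv)
  memLp_potential := (hW.memLp_potentialMeasure_iff hη.continuous).2 <|
    (hW.continuous.mul (hη.continuous.norm.pow 2)).integrable_of_hasCompactSupport
      (hc.norm.comp_left (g := (· ^ 2)) (zero_pow two_ne_zero)).mul_left

/-- The homogeneous form of the variational problem makes the perturbation `u + s η` of a minimizer
admissible without any renormalization. -/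
lemma IsUnitPair.euler_lagrange (hW : IsTrap W) (hlam : 0 ≤ lam) (huv : IsUnitPair W u v)
    (hmin : gpEnergy W lam u v = groundEnergy W lam) (hη : ContDiff ℝ 1 η)
    (hc : HasCompactSupport η) :
    trapForm W u v η (deriv η) + lam * (∫ x, u x ^ 3 * η x) +
      (trapEnergy W u v - 2 * groundEnergy W lam) * (∫ x, u x * η x) = 0 := by
  have hpair := hW.isFormPair_of_hasCompactSupport hη hc
  have hmass := hasDerivAt_integral_norm_add_smul_sq huv.memLp hpair.memLp
  have hpow : ∀ y : ℝ, ‖y‖ ^ 4 = y ^ 4 := (Even.pow_abs (by decide) ·)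
  have hquart := hasDerivAt_integral_add_mul_pow 4 huv.continuous
    (by simpa only [hpow] using huv.integrable_norm_pow_four) hη.continuous hc
  let excess : ℝ → ℝ := fun s ↦
    trapEnergy W (fun x ↦ u x + s • η x) (fun x ↦ v x + s • deriv η x) *
      (∫ x, ‖u x + s • η x‖ ^ 2) + lam / 2 * (∫ x, (u x + s * η x) ^ 4) -
      groundEnergy W lam * (∫ x, ‖u x + s • η x‖ ^ 2) ^ 2
  have hderiv : HasDerivAt excess _ 0 := (((huv.toIsFormPair.hasDerivAt_trapEnergy hpair).mul
    hmass).add (hquart.const_mul (lam / 2))).sub ((hmass.pow 2).const_mul (groundEnergy W lam))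
  have hexcess_zero : excess 0 = 0 := by
    simp only [gpEnergy, hpow] at hmin
    simp only [excess, zero_smul, zero_mul, add_zero, huv.integral_eq_one]
    linarith
  have hloc : IsLocalMin excess 0 := Eventually.of_forall fun s ↦ by
    have hle := (huv.toIsFormPair.add (hpair.const_smul s)).groundEnergy_mul_sq_le hlam
    simp only [hpow] at hle
    exact hexcess_zero.trans_le (sub_nonneg.2 hle)
  have hzero := hloc.hasDerivAt_eq_zero hderiv
  have hinner : ∫ x, ⟪u x, η x⟫ = ∫ x, u x * η x :=
    integral_congr_ae (ae_of_all _ fun x ↦ mul_comm _ _)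
  simp only [zero_smul, add_zero, huv.integral_eq_one, hinner] at hzero
  norm_num at hzero
  linarith

end EulerLagrange

section Regularity

variable {E : Type*} [NormedAddCommGroup E] [NormedSpace ℝ E]

lemma exists_deriv_eq_of_integral_eq_zero [CompleteSpace E] {σ : ℝ → E} (hσ : Continuous σ)
    (hc : HasCompactSupport σ) (h0 : ∫ x, σ x = 0) :
    ∃ ζ : ℝ → E, ContDiff ℝ 1 ζ ∧ HasCompactSupport ζ ∧ deriv ζ = σ := by
  obtain ⟨r, -, hr⟩ := hc.isCompact.isBounded.subset_closedBall_lt 0 0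
  rw [closedBall_eq_Icc, zero_sub, zero_add] at hr
  have hout : ∀ y ∉ Icc (-r) r, σ y = 0 := fun y hy ↦
    image_eq_zero_of_notMem_tsupport (mt (@hr y) hy)
  have hint : Integrable σ := hσ.integrable_of_hasCompactSupport hc
  have hderiv : ∀ x, HasDerivAt (fun x ↦ ∫ y in Iic x, σ y) (σ x) x := fun x ↦ by
    have hprim : (fun x ↦ ∫ y in Iic x, σ y) =
        fun x ↦ (∫ y in (0 : ℝ)..x, σ y) + ∫ y in Iic (0 : ℝ), σ y := funext fun x ↦
      (sub_eq_iff_eq_add.1 (intervalIntegral.integral_Iic_sub_Iic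
        hint.integrableOn hint.integrableOn))
    exact hprim ▸ (hσ.integral_hasStrictDerivAt 0 x).hasDerivAt.add_const _
  have hdζ : deriv (fun x ↦ ∫ y in Iic x, σ y) = σ := funext fun x ↦ (hderiv x).deriv
  refine ⟨_, contDiff_one_iff_deriv.2 ⟨fun x ↦ (hderiv x).differentiableAt, hdζ.symm ▸ hσ⟩,
    HasCompactSupport.intro (isCompact_Icc (a := -r) (b := r)) fun x hx ↦ ?_, hdζ⟩
  rcases lt_or_ge x (-r) with hxr | hxr
  · exact setIntegral_eq_zero_of_forall_eq_zero fun y hy ↦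
      hout y fun hyr ↦ (hyr.1.trans hy).not_gt hxr
  · rw [setIntegral_eq_integral_of_forall_compl_eq_zero (s := Iic x) fun y hy ↦
      hout y fun hyr ↦ hx ⟨hxr, (not_le.1 hy).le.trans hyr.2⟩, h0]

lemma exists_ae_eq_const_of_integral_deriv_smul_eq_zero [CompleteSpace E] {f : ℝ → E}
    (hf : LocallyIntegrable f)
    (h : ∀ η : ℝ → ℝ, ContDiff ℝ 1 η → HasCompactSupport η → ∫ x, deriv η x • f x = 0) :
    ∃ c, f =ᵐ[volume] fun _ ↦ c := by
  let b : ContDiffBump (0 : ℝ) := default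
  have hρ : Continuous (b.normed volume) := b.continuous_normed
  have hρc : HasCompactSupport (b.normed volume) := b.hasCompactSupport_normed
  have hint : ∀ η : ℝ → ℝ, Continuous η → HasCompactSupport η → Integrable fun x ↦ η x • f x :=
    fun η hη hc ↦ hf.integrable_smul_left_of_hasCompactSupport hη hc
  refine ⟨∫ x, b.normed volume x • f x, ae_eq_of_integral_contDiff_smul_eq hf
    (locallyIntegrable_const _) fun η hη hc ↦ ?_⟩
  have hηρ := hη.continuous.sub (hρ.const_mul (∫ y, η y))
  have hmean : ∫ x, (η x - (∫ y, η y) * b.normed volume x) = 0 := by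
    rw [integral_sub (hη.continuous.integrable_of_hasCompactSupport hc)
      ((hρ.integrable_of_hasCompactSupport hρc).const_mul _), integral_const_mul,
      b.integral_normed, mul_one, sub_self]
  obtain ⟨ζ, hζ, hζc, hdζ⟩ :=
    exists_deriv_eq_of_integral_eq_zero hηρ (hc.sub hρc.mul_left) hmean
  have hzero := h ζ hζ hζc
  simp only [hdζ, Pi.sub_apply, sub_smul, mul_smul] at hzero
  rw [integral_sub (hint η hη.continuous hc) ((hint _ hρ hρc).fun_smul _), integral_smul,
    sub_eq_zero] at hzero
  rw [hzero, integral_smul_const]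

lemma exists_ae_eq_hasDerivAt_of_integral_deriv_smul_eq [CompleteSpace E] {f w : ℝ → E}
    (hf : LocallyIntegrable f) (hw : Continuous w)
    (h : ∀ η : ℝ → ℝ, ContDiff ℝ 1 η → HasCompactSupport η →
      ∫ x, deriv η x • f x = -∫ x, η x • w x) :
    ∃ F : ℝ → E, f =ᵐ[volume] F ∧ ∀ x, HasDerivAt F (w x) x := by
  have hF : ∀ x, HasDerivAt (fun x ↦ ∫ y in (0 : ℝ)..x, w y) (w x) x := fun x ↦
    (hw.integral_hasStrictDerivAt 0 x).hasDerivAt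
  have hFc : Continuous fun x ↦ ∫ y in (0 : ℝ)..x, w y :=
    continuous_iff_continuousAt.2 fun x ↦ (hF x).continuousAt
  have hweak : ∀ η : ℝ → ℝ, ContDiff ℝ 1 η → HasCompactSupport η →
      ∫ x, deriv η x • (f x - ∫ y in (0 : ℝ)..x, w y) = 0 := fun η hη hηc ↦ by
    have hη' := hη.continuous_deriv le_rfl
    have hint : Integrable fun x ↦ deriv η x • ∫ y in (0 : ℝ)..x, w y :=
      (hη'.smul hFc).integrable_of_hasCompactSupport hηc.deriv.smul_right
    have hparts := integral_bilinear_hasDerivAt_right_eq_neg_left_of_integrable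
      (L := ContinuousLinearMap.lsmul ℝ ℝ)
      (fun x _ ↦ (hη.differentiable one_ne_zero x).hasDerivAt) (fun x _ ↦ hF x)
      ((hη.continuous.smul hw).integrable_of_hasCompactSupport hηc.smul_right) hint
      ((hη.continuous.smul hFc).integrable_of_hasCompactSupport hηc.smul_right)
    simp only [ContinuousLinearMap.lsmul_apply] at hparts
    simp only [smul_sub]
    rw [integral_sub (hf.integrable_smul_left_of_hasCompactSupport hη' hηc.deriv) hint, h η hη hηc,
      hparts, neg_neg, sub_self]
  obtain ⟨c, hc⟩ := exists_ae_eq_const_of_integral_deriv_smul_eq_zero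
    (hf.sub hFc.locallyIntegrable) hweak
  refine ⟨fun x ↦ c + ∫ y in (0 : ℝ)..x, w y, ?_, fun x ↦ (hF x).const_add c⟩
  filter_upwards [hc] with x hx
  exact sub_eq_iff_eq_add.1 hx

lemma IsUnitPair.integral_deriv_smul_eq {W u v η : ℝ → ℝ} {lam : ℝ} (hW : IsTrap W)
    (hlam : 0 ≤ lam) (huv : IsUnitPair W u v) (hmin : gpEnergy W lam u v = groundEnergy W lam)
    (hη : ContDiff ℝ 1 η) (hc : HasCompactSupport η) :
    ∫ x, deriv η x • v x = -∫ x, η x •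
      ((W x + lam * u x ^ 2 + (trapEnergy W u v - 2 * groundEnergy W lam)) * u x) := by
  have hel := huv.euler_lagrange hW hlam hmin hη hc
  rw [trapForm, hW.integral_potentialMeasure, add_assoc, add_assoc, add_eq_zero_iff_eq_neg] at hel
  simp only [RCLike.inner_apply, conj_trivial] at hel
  refine hel.trans (congrArg Neg.neg ?_)
  have hWc := hW.continuous
  have hu := huv.continuous
  have hηc := hη.continuous
  have hcub : Integrable fun x ↦ lam * (u x ^ 3 * η x) :=
    ((hu.pow 3).mul hηc).integrable_of_hasCompactSupport hc.mul_left |>.const_mul lam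
  have hlin : Integrable fun x ↦
      (trapEnergy W u v - 2 * groundEnergy W lam) * (u x * η x) :=
    (hu.mul hηc).integrable_of_hasCompactSupport hc.mul_left |>.const_mul _
  have hpot : Integrable fun x ↦ W x • (η x * u x) :=
    (hWc.smul (hηc.mul hu)).integrable_of_hasCompactSupport hc.mul_right.smul_left
  rw [← integral_const_mul, ← integral_const_mul, ← integral_add hcub hlin,
    ← integral_add hpot (hcub.fun_add hlin)]
  refine integral_congr_ae (ae_of_all _ fun x ↦ ?_)
  simp only [smul_eq_mul]
  ring

lemma IsUnitPair.exists_hasDerivAt {W u v : ℝ → ℝ} {lam : ℝ} (hW : IsTrap W) (hlam : 0 ≤ lam)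
    (huv : IsUnitPair W u v) (hmin : gpEnergy W lam u v = groundEnergy W lam) :
    ∃ P w : ℝ → ℝ, Continuous P ∧ v =ᵐ[volume] w ∧ (∀ x, HasDerivAt u (w x) x) ∧
      ∀ x, HasDerivAt w (P x * u x) x := by
  have hu := huv.continuous
  have hWc := hW.continuous
  let P : ℝ → ℝ := fun x ↦ W x + lam * u x ^ 2 + (trapEnergy W u v - 2 * groundEnergy W lam)
  have hP : Continuous P := by fun_prop
  obtain ⟨w, hvw, hw⟩ := exists_ae_eq_hasDerivAt_of_integral_deriv_smul_eq
    (huv.memLp_deriv.locallyIntegrable one_le_two) (hP.mul hu) fun _ hη hc ↦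
      huv.integral_deriv_smul_eq hW hlam hmin hη hc
  refine ⟨P, w, hP, hvw, fun x ↦ ?_, hw⟩
  have hprim : u = fun x ↦ (∫ y in (0 : ℝ)..x, w y) + u 0 := funext fun x ↦ by
    rw [← sub_eq_iff_eq_add, ← huv.integral_eq_sub]
    exact intervalIntegral.integral_congr_ae (hvw.mono fun y hy _ ↦ hy)
  have hwc : Continuous w := continuous_iff_continuousAt.2 fun x ↦ (hw x).continuousAt
  rw [hprim]
  exact (hwc.integral_hasStrictDerivAt 0 x).hasDerivAt.add_const _

end Regularity

section Positivity

variable {E : Type*} [NormedAddCommGroup E] [NormedSpace ℝ E]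

lemma eq_zero_of_hasDerivAt_clm_apply {A : ℝ → E →L[ℝ] E} (hA : Continuous A) {y : ℝ → E}
    (hy : ∀ t, HasDerivAt y (A t (y t)) t) {a : ℝ} (h0 : y a = 0) (t : ℝ) : y t = 0 := by
  obtain ⟨K, hK⟩ := (isCompact_Icc (a := min a t - 1)
    (b := max a t + 1)).exists_bound_of_continuousOn hA.continuousOn
  have hlip : ∀ s ∈ Ioo (min a t - 1) (max a t + 1), LipschitzOnWith K.toNNReal (A s) univ :=
    fun s hs ↦ ((A s).lipschitz.weaken <| by
      rw [← norm_toNNReal]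
      exact Real.toNNReal_le_toNNReal (hK s (Ioo_subset_Icc_self hs))).lipschitzOnWith
  refine ODE_solution_unique_of_mem_Ioo (v := fun s ↦ A s) (g := fun _ ↦ 0) (t₀ := a) hlip ?_
    (fun s _ ↦ ⟨hy s, mem_univ _⟩)
    (fun s _ ↦ ⟨(hasDerivAt_const s (0 : E)).congr_deriv (map_zero _).symm, mem_univ _⟩) h0 ?_
  · constructor <;> linarith [min_le_left a t, le_max_left a t]
  · constructor <;> linarith [min_le_right a t, le_max_right a t]

lemma eq_zero_of_hasDerivAt_of_hasDerivAt_smul {P : ℝ → ℝ} (hP : Continuous P) {u w : ℝ → E}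
    (hu : ∀ x, HasDerivAt u (w x) x) (hw : ∀ x, HasDerivAt w (P x • u x) x) {a : ℝ} (hua : u a = 0)
    (hwa : w a = 0) (x : ℝ) : u x = 0 := by
  let A : ℝ → E × E →L[ℝ] E × E := fun x ↦
    .comp (.inl ℝ E E) (.snd ℝ E E) + P x • .comp (.inr ℝ E E) (.fst ℝ E E)
  have hzero := eq_zero_of_hasDerivAt_clm_apply (A := A) (by fun_prop)
    (y := fun x ↦ (u x, w x)) (fun x ↦ ((hu x).prodMk (hw x)).congr_deriv (by simp [A]))
    (a := a) (by simp [hua, hwa]) x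
  exact congrArg Prod.fst hzero

lemma IsUnitPair.pos_of_nonneg {W u v : ℝ → ℝ} {lam : ℝ} (hW : IsTrap W) (hlam : 0 ≤ lam)
    (huv : IsUnitPair W u v) (hmin : gpEnergy W lam u v = groundEnergy W lam) (hpos : ∀ x, 0 ≤ u x)
    (x : ℝ) : 0 < u x := by
  obtain ⟨P, w, hP, -, hu, hw⟩ := huv.exists_hasDerivAt hW hlam hmin
  refine (hpos x).lt_of_ne' fun hux ↦ ?_
  have hwx : w x = 0 := IsLocalMin.hasDerivAt_eq_zero
    (Eventually.of_forall fun y ↦ hux.trans_le (hpos y)) (hu x)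
  have hzero : ∀ y, u y = 0 := eq_zero_of_hasDerivAt_of_hasDerivAt_smul hP hu hw hux hwx
  simpa [hzero] using huv.integral_eq_one

end Positivity

section Kato

lemma absolutelyContinuousOnInterval_of_dist_le {X Y : Type*} [PseudoMetricSpace X]
    [PseudoMetricSpace Y] {h : ℝ → X} {G : ℝ → Y} {a b : ℝ}
    (hG : AbsolutelyContinuousOnInterval G a b) (hle : ∀ x y, dist (h x) (h y) ≤ dist (G x) (G y)) :
    AbsolutelyContinuousOnInterval h a b :=
  squeeze_zero (fun _ ↦ Finset.sum_nonneg fun _ _ ↦ dist_nonneg)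
    (fun _ ↦ Finset.sum_le_sum fun _ _ ↦ hle _ _) hG

lemma norm_deriv_le_of_dist_le {E F : Type*} [NormedAddCommGroup E] [NormedSpace ℝ E]
    [NormedAddCommGroup F] [NormedSpace ℝ F] {h : ℝ → E} {G : ℝ → F} {G' : F} {x : ℝ}
    (hG : HasDerivAt G G' x) (hle : ∀ y, dist (h y) (h x) ≤ dist (G y) (G x)) :
    ‖deriv h x‖ ≤ ‖G'‖ := by
  by_cases hh : DifferentiableAt ℝ h x
  · refine le_of_tendsto_of_tendsto' (hasDerivAt_iff_tendsto_slope.1 hh.hasDerivAt).norm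
      (hasDerivAt_iff_tendsto_slope.1 hG).norm fun y ↦ ?_
    simp only [slope_def_module, norm_smul, ← dist_eq_norm]
    gcongr
    exact hle y
  · simp only [deriv_zero_of_not_differentiableAt hh, norm_zero, norm_nonneg]

namespace IsH1Pair

variable {E : Type*} [NormedAddCommGroup E] [NormedSpace ℝ E] {f g : ℝ → E}

lemma dist_norm_le (hfg : IsH1Pair f g) (c x y : ℝ) :
    dist ‖f x‖ ‖f y‖ ≤ dist (∫ t in c..x, ‖g t‖) (∫ t in c..y, ‖g t‖) := by
  have hg := intervalIntegrable_of_memLp_two hfg.memLp_deriv.norm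
  calc dist ‖f x‖ ‖f y‖ ≤ ‖f x - f y‖ := dist_norm_norm_le _ _
    _ = ‖∫ t in y..x, g t‖ := by rw [hfg.integral_eq_sub]
    _ ≤ |∫ t in y..x, ‖g t‖| := intervalIntegral.norm_integral_le_abs_integral_norm
    _ = dist (∫ t in c..x, ‖g t‖) (∫ t in c..y, ‖g t‖) := by
        rw [dist_eq, intervalIntegral.integral_interval_sub_left (hg c x) (hg c y)]

lemma ae_norm_deriv_norm_le (hfg : IsH1Pair f g) : ∀ᵐ x, ‖deriv (fun y ↦ ‖f y‖) x‖ ≤ ‖g x‖ := by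
  have hg := hfg.memLp_deriv.norm.locallyIntegrable one_le_two
  filter_upwards [LocallyIntegrable.ae_hasDerivAt_integral hg] with x hx
  exact (norm_deriv_le_of_dist_le (hx 0) fun y ↦ hfg.dist_norm_le 0 y x).trans_eq (norm_norm _)

lemma norm (hfg : IsH1Pair f g) : IsH1Pair (fun x ↦ ‖f x‖) (deriv fun x ↦ ‖f x‖) where
  memLp := hfg.memLp.norm
  memLp_deriv := hfg.memLp_deriv.mono (measurable_deriv _).aestronglyMeasurable
    hfg.ae_norm_deriv_norm_le
  integral_eq_sub a b := AbsolutelyContinuousOnInterval.integral_deriv_eq_sub <|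
    absolutelyContinuousOnInterval_of_dist_le
      ((intervalIntegrable_of_memLp_two hfg.memLp_deriv.norm a
        b).absolutelyContinuousOnInterval_intervalIntegral left_mem_uIcc) (hfg.dist_norm_le a)

end IsH1Pair

variable {E : Type*} [NormedAddCommGroup E] [NormedSpace ℝ E] {W : ℝ → ℝ} {f g : ℝ → E} {lam : ℝ}

lemma IsUnitPair.norm (hfg : IsUnitPair W f g) :
    IsUnitPair W (fun x ↦ ‖f x‖) (deriv fun x ↦ ‖f x‖) where
  toIsH1Pair := hfg.toIsH1Pair.norm
  memLp_potential := hfg.memLp_potential.norm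
  integral_eq_one := by simpa only [norm_norm] using hfg.integral_eq_one

lemma IsH1Pair.gpEnergy_norm_le (hfg : IsH1Pair f g) (W : ℝ → ℝ) (lam : ℝ) :
    gpEnergy W lam (fun x ↦ ‖f x‖) (deriv fun x ↦ ‖f x‖) ≤ gpEnergy W lam f g := by
  simp only [gpEnergy, trapEnergy, norm_norm]
  gcongr ?_ + _ + _
  exact integral_mono_ae hfg.norm.memLp_deriv.norm.integrable_sq hfg.memLp_deriv.norm.integrable_sq
    (hfg.ae_norm_deriv_norm_le.mono fun x hx ↦ pow_le_pow_left₀ (norm_nonneg _) hx 2)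

end Kato

section Existence

variable {W : ℝ → ℝ} {lam : ℝ}

lemma IsTrap.exists_isUnitPair (hW : IsTrap W) : ∃ f g : ℝ → ℝ, IsUnitPair W f g := by
  let b : ContDiffBump (0 : ℝ) := default
  have hb := hW.isFormPair_of_hasCompactSupport b.contDiff b.hasCompactSupport
  have hpos : 0 < ∫ x, ‖b x‖ ^ 2 :=
    (b.continuous.norm.pow 2).integral_pos_of_hasCompactSupport_nonneg_nonzero
      (b.hasCompactSupport.norm.comp_left (g := (· ^ 2)) (zero_pow two_ne_zero))
      (fun _ ↦ sq_nonneg _) (x := 0) (by simp [b.eventuallyEq_one.self_of_nhds])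
  exact ⟨_, _, hb.isUnitPair_inv_sqrt_smul hpos⟩

lemma IsTrap.exists_minimizer (hW : IsTrap W) (hlam : 0 ≤ lam) :
    ∃ u v : ℝ → ℝ, IsUnitPair W u v ∧ gpEnergy W lam u v = groundEnergy W lam := by
  obtain ⟨f, g, hfg⟩ := hW.exists_isUnitPair
  have hne : (unitEnergies W lam).Nonempty := ⟨_, f, g, hfg, rfl⟩
  obtain ⟨e, -, hlim, he⟩ := exists_seq_tendsto_sInf hne (bddBelow_unitEnergies hlam W)
  choose φ φ' hφ hφe using he
  exact hW.exists_minimizer_of_tendsto hlam hφ (by rw [funext hφe]; exact hlim)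

lemma IsTrap.exists_pos_minimizer (hW : IsTrap W) (hlam : 0 ≤ lam) :
    ∃ u v : ℝ → ℝ, IsUnitPair W u v ∧ gpEnergy W lam u v = groundEnergy W lam ∧ ∀ x, 0 < u x := by
  obtain ⟨u, v, huv, hmin⟩ := hW.exists_minimizer hlam
  have hmin' : gpEnergy W lam (fun x ↦ ‖u x‖) (deriv fun x ↦ ‖u x‖) = groundEnergy W lam :=
    ((huv.gpEnergy_norm_le W lam).trans_eq hmin).antisymm (huv.norm.groundEnergy_le hlam)
  exact ⟨_, _, huv.norm, hmin', huv.norm.pos_of_nonneg hW hlam hmin' fun x ↦ norm_nonneg _⟩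

end Existence

section ClassicalStates

/-- A differentiable state of finite energy and unit mass in the potential `W`. -/
structure IsUnitState {E : Type*} [NormedAddCommGroup E] [NormedSpace ℝ E] (W : ℝ → ℝ)
    (ψ : ℝ → E) : Prop extends IsUnitPair W ψ (deriv ψ) where
  differentiable : Differentiable ℝ ψ

variable {E : Type*} [NormedAddCommGroup E] {W : ℝ → ℝ} {lam : ℝ}

lemma IsTrap.gpEnergy_eq (hW : IsTrap W) (f g : ℝ → E) :
    gpEnergy W lam f g =
      (∫ x, ‖g x‖ ^ 2) + (∫ x, W x * ‖f x‖ ^ 2) + lam / 2 * ∫ x, ‖f x‖ ^ 4 := by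
  rw [gpEnergy, trapEnergy, hW.integral_potentialMeasure]
  rfl

variable [NormedSpace ℝ E]

lemma IsTrap.isUnitState_iff [CompleteSpace E] (hW : IsTrap W) {ψ : ℝ → E} :
    IsUnitState W ψ ↔ Differentiable ℝ ψ ∧ Integrable (fun x ↦ ‖ψ x‖ ^ 2) ∧
      Integrable (fun x ↦ ‖deriv ψ x‖ ^ 2) ∧ Integrable (fun x ↦ W x * ‖ψ x‖ ^ 2) ∧
      ∫ x, ‖ψ x‖ ^ 2 = 1 := by
  rw [← memLp_two_iff_integrable_sq_norm (aestronglyMeasurable_deriv ψ volume)]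
  constructor
  · rintro ⟨hψ, hd⟩
    exact ⟨hd, hψ.memLp.norm.integrable_sq, hψ.memLp_deriv,
      (hW.memLp_potentialMeasure_iff hd.continuous).1 hψ.memLp_potential, hψ.integral_eq_one⟩
  · rintro ⟨hd, hψ, hψ', hpot, hone⟩
    rw [← memLp_two_iff_integrable_sq_norm hd.continuous.aestronglyMeasurable] at hψ
    exact ⟨⟨⟨.of_differentiable hd hψ hψ', (hW.memLp_potentialMeasure_iff hd.continuous).2 hpot⟩,
      hone⟩, hd⟩

lemma IsTrap.exists_pos_isUnitState (hW : IsTrap W) (hlam : 0 ≤ lam) :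
    ∃ w : ℝ → ℝ, IsUnitState W w ∧ gpEnergy W lam w (deriv w) = groundEnergy W lam ∧
      ∀ x, 0 < w x := by
  obtain ⟨u, v, huv, hmin, hpos⟩ := hW.exists_pos_minimizer hlam
  obtain ⟨-, w, -, hvw, hu, -⟩ := huv.exists_hasDerivAt hW hlam hmin
  obtain rfl : deriv u = w := funext fun x ↦ (hu x).deriv
  have hkin : ∫ x, ‖deriv u x‖ ^ 2 = ∫ x, ‖v x‖ ^ 2 :=
    integral_congr_ae (hvw.mono fun x hx ↦ by simp only [hx])
  have hd : Differentiable ℝ u := fun x ↦ (hu x).differentiableAt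
  refine ⟨u, ⟨⟨⟨.of_differentiable hd huv.memLp (huv.memLp_deriv.ae_eq hvw), huv.memLp_potential⟩,
    huv.integral_eq_one⟩, hd⟩, ?_, hpos⟩
  rw [← hmin, gpEnergy, gpEnergy, trapEnergy, trapEnergy, hkin]

lemma IsUnitState.groundEnergy_le {ψ : ℝ → E} (hψ : IsUnitState W ψ) (hlam : 0 ≤ lam) :
    groundEnergy W lam ≤ gpEnergy W lam ψ (deriv ψ) :=
  (hψ.toIsUnitPair.norm.groundEnergy_le hlam).trans (hψ.gpEnergy_norm_le W lam)

lemma deriv_comp_neg_fun (ψ : ℝ → E) : deriv (fun x ↦ ψ (-x)) = fun x ↦ -deriv ψ (-x) :=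
  funext (deriv_comp_neg ψ)

lemma IsUnitState.comp_neg [CompleteSpace E] (hW : IsTrap W) (heven : ∀ x, W (-x) = W x)
    {ψ : ℝ → E} (hψ : IsUnitState W ψ) : IsUnitState W fun x ↦ ψ (-x) := by
  obtain ⟨hd, hsq, hsq', hpot, hone⟩ := hW.isUnitState_iff.1 hψ
  simp only [hW.isUnitState_iff, deriv_comp_neg_fun, norm_neg]
  refine ⟨hd.comp differentiable_neg, hsq.comp_neg, hsq'.comp_neg, ?_, ?_⟩
  · simpa only [heven] using hpot.comp_neg
  · rwa [integral_neg_eq_self fun x ↦ ‖ψ x‖ ^ 2]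

lemma IsTrap.gpEnergy_comp_neg (hW : IsTrap W) (heven : ∀ x, W (-x) = W x) (ψ : ℝ → E) :
    gpEnergy W lam (fun x ↦ ψ (-x)) (deriv fun x ↦ ψ (-x)) = gpEnergy W lam ψ (deriv ψ) := by
  have hpot := integral_neg_eq_self (fun x ↦ W x * ‖ψ x‖ ^ 2) volume
  simp only [heven] at hpot
  rw [hW.gpEnergy_eq, hW.gpEnergy_eq, deriv_comp_neg_fun, hpot]
  simp only [norm_neg]
  rw [integral_neg_eq_self fun x ↦ ‖deriv ψ x‖ ^ 2, integral_neg_eq_self fun x ↦ ‖ψ x‖ ^ 4]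

lemma IsUnitState.smul_const [CompleteSpace E] (hW : IsTrap W) {w : ℝ → ℝ}
    (hw : IsUnitState W w) {c : E} (hc : ‖c‖ = 1) : IsUnitState W fun x ↦ w x • c := by
  rw [hW.isUnitState_iff] at hw ⊢
  have hderiv : deriv (fun x ↦ w x • c) = fun x ↦ deriv w x • c :=
    funext fun x ↦ deriv_smul_const (hw.1 x) c
  simpa only [hderiv, norm_smul, hc, mul_one] using
    ⟨hw.1.smul_const c, hw.2⟩

lemma gpEnergy_smul_const {w : ℝ → ℝ} (hw : Differentiable ℝ w) {c : E} (hc : ‖c‖ = 1) :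
    gpEnergy W lam (fun x ↦ w x • c) (deriv fun x ↦ w x • c) = gpEnergy W lam w (deriv w) := by
  have hderiv : deriv (fun x ↦ w x • c) = fun x ↦ deriv w x • c :=
    funext fun x ↦ deriv_smul_const (hw x) c
  simp only [gpEnergy, trapEnergy, hderiv, norm_smul, hc, mul_one]

end ClassicalStates

section Polar

variable {E : Type*} [NormedAddCommGroup E]

lemma exists_eq_const_of_ae_deriv_eq_zero [NormedSpace ℝ E] [CompleteSpace E] {e : ℝ → E}
    (he : Differentiable ℝ e) (h0 : ∀ᵐ x, deriv e x = 0) : ∃ c, ∀ x, e x = c := by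
  have h0' : deriv e =ᵐ[volume] fun _ ↦ 0 := h0
  refine ⟨e 0, fun x ↦ sub_eq_zero.1 ?_⟩
  rw [← intervalIntegral.integral_deriv_eq_sub (fun y _ ↦ he y)
    (intervalIntegrable_const.congr_ae (ae_restrict_of_ae h0'.symm)),
    intervalIntegral.integral_congr_ae (h0.mono fun y hy _ ↦ hy), intervalIntegral.integral_zero]

variable [InnerProductSpace ℝ E] {ψ : ℝ → E} {x : ℝ}

lemma differentiableAt_inv_norm_smul (hd : DifferentiableAt ℝ ψ x) (h0 : ψ x ≠ 0) :
    DifferentiableAt ℝ (fun y ↦ ‖ψ y‖⁻¹ • ψ y) x :=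
  ((hd.norm ℝ h0).inv (norm_ne_zero_iff.2 h0)).smul hd

lemma sq_norm_deriv_eq (hd : DifferentiableAt ℝ ψ x) (h0 : ψ x ≠ 0) :
    ‖deriv ψ x‖ ^ 2 = ‖deriv (fun y ↦ ‖ψ y‖) x‖ ^ 2 +
      ‖ψ x‖ ^ 2 * ‖deriv (fun y ↦ ‖ψ y‖⁻¹ • ψ y) x‖ ^ 2 := by
  set e := fun y ↦ ‖ψ y‖⁻¹ • ψ y
  have hr := (hd.norm ℝ h0).hasDerivAt
  have he := (differentiableAt_inv_norm_smul hd h0).hasDerivAt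
  have hunit : ∀ᶠ y in 𝓝 x, ‖e y‖ = 1 := (hd.continuousAt.eventually_ne h0).mono fun y hy ↦
    norm_smul_inv_norm (𝕜 := ℝ) hy
  have horth : ⟪e x, deriv e x⟫ = 0 := by
    have hconst : (‖e ·‖ ^ 2) =ᶠ[𝓝 x] fun _ ↦ (1 : ℝ) ^ 2 := hunit.mono fun y hy ↦
      congrArg (· ^ 2) hy
    have hzero := he.norm_sq.unique ((hasDerivAt_const x _).congr_of_eventuallyEq hconst)
    simpa using hzero
  have hpolar : ψ = fun y ↦ ‖ψ y‖ • e y := funext fun y ↦ by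
    rcases eq_or_ne (ψ y) 0 with hy | hy
    · simp [hy]
    · exact (smul_inv_smul₀ (norm_ne_zero_iff.2 hy) _).symm
  have hderiv : deriv ψ x = ‖ψ x‖ • deriv e x + deriv (fun y ↦ ‖ψ y‖) x • e x := by
    conv_lhs => rw [hpolar]
    exact (hr.smul he).deriv
  rw [hderiv, norm_add_sq_real, inner_smul_left, inner_smul_right, real_inner_comm, horth,
    norm_smul, norm_smul, hunit.self_of_nhds, norm_norm]
  simp only [mul_zero, mul_one]
  ring

lemma IsH1Pair.exists_eq_norm_smul [CompleteSpace E] (hψ : IsH1Pair ψ (deriv ψ))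
    (hd : Differentiable ℝ ψ) (h0 : ∀ x, ψ x ≠ 0)
    (hle : ∫ x, ‖deriv ψ x‖ ^ 2 ≤ ∫ x, ‖deriv (fun y ↦ ‖ψ y‖) x‖ ^ 2) :
    ∃ c, ∀ x, ψ x = ‖ψ x‖ • c := by
  have hangular := fun x ↦ sub_eq_iff_eq_add'.2 (sq_norm_deriv_eq (hd x) (h0 x))
  have hint := hψ.memLp_deriv.norm.integrable_sq
  have hint' := hψ.norm.memLp_deriv.norm.integrable_sq
  have hzero : ∀ᵐ x, ‖ψ x‖ ^ 2 * ‖deriv (fun y ↦ ‖ψ y‖⁻¹ • ψ y) x‖ ^ 2 = 0 := by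
    refine (integral_eq_zero_iff_of_nonneg (fun x ↦ by positivity)
      ((hint.sub hint').congr (ae_of_all _ hangular))).1 (le_antisymm ?_
        (integral_nonneg fun x ↦ by positivity))
    simp only [← hangular]
    rw [integral_sub hint hint']
    exact sub_nonpos.2 hle
  obtain ⟨c, hc⟩ := exists_eq_const_of_ae_deriv_eq_zero
    (fun x ↦ differentiableAt_inv_norm_smul (hd x) (h0 x)) (hzero.mono fun x hx ↦ by
      simpa [h0 x] using hx)
  exact ⟨c, fun x ↦ (inv_smul_eq_iff₀ (norm_ne_zero_iff.2 (h0 x))).1 (hc x)⟩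

end Polar

section Mixture

variable {E F : Type*} [NormedAddCommGroup E] [InnerProductSpace ℝ E]
  [NormedAddCommGroup F] [InnerProductSpace ℝ F] {W : ℝ → ℝ} {lam : ℝ} {ψ : ℝ → E} {φ : ℝ → F}

/-- The state with values in `E ⊕ F` whose density is the mean of the densities of `ψ` and `φ`. Its
norm is the competitor in the argument by convexity of the energy in the density. -/
noncomputable def mixture (ψ : ℝ → E) (φ : ℝ → F) (x : ℝ) : WithLp 2 (E × F) :=
  (√2)⁻¹ • WithLp.toLp 2 (ψ x, φ x)

lemma sq_norm_mixture (ψ : ℝ → E) (φ : ℝ → F) (x : ℝ) :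
    ‖mixture ψ φ x‖ ^ 2 = (‖ψ x‖ ^ 2 + ‖φ x‖ ^ 2) / 2 := by
  rw [mixture, norm_smul, mul_pow, WithLp.prod_norm_sq_eq_of_L2, norm_inv,
    norm_of_nonneg (sqrt_nonneg _), inv_pow, sq_sqrt zero_le_two, inv_mul_eq_div,
    WithLp.toLp_fst, WithLp.toLp_snd]

lemma hasDerivAt_mixture {ψ' : E} {φ' : F} {x : ℝ} (hψ : HasDerivAt ψ ψ' x)
    (hφ : HasDerivAt φ φ' x) :
    HasDerivAt (mixture ψ φ) ((√2)⁻¹ • WithLp.toLp 2 (ψ', φ')) x :=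
  ((WithLp.prodContinuousLinearEquiv 2 ℝ E F).symm.hasFDerivAt.comp_hasDerivAt x
    (hψ.prodMk hφ)).const_smul (√2)⁻¹

lemma deriv_mixture (hψ : Differentiable ℝ ψ) (hφ : Differentiable ℝ φ) :
    deriv (mixture ψ φ) = mixture (deriv ψ) (deriv φ) :=
  funext fun x ↦ (hasDerivAt_mixture (hψ x).hasDerivAt (hφ x).hasDerivAt).deriv

lemma IsTrap.isUnitState_mixture [CompleteSpace E] [CompleteSpace F] (hW : IsTrap W)
    (hψ : IsUnitState W ψ) (hφ : IsUnitState W φ) : IsUnitState W (mixture ψ φ) := by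
  rw [hW.isUnitState_iff] at hψ hφ ⊢
  obtain ⟨hψd, hψsq, hψsq', hψpot, hψone⟩ := hψ
  obtain ⟨hφd, hφsq, hφsq', hφpot, hφone⟩ := hφ
  simp only [deriv_mixture hψd hφd, sq_norm_mixture]
  refine ⟨fun x ↦ (hasDerivAt_mixture (hψd x).hasDerivAt (hφd x).hasDerivAt).differentiableAt,
    (hψsq.add hφsq).div_const 2, (hψsq'.add hφsq').div_const 2, ?_, ?_⟩
  · refine ((hψpot.add hφpot).div_const 2).congr (ae_of_all _ fun x ↦ ?_)
    simp only [Pi.add_apply]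
    ring
  · rw [integral_div, integral_add hψsq hφsq, hψone, hφone]
    norm_num

lemma IsUnitState.gpEnergy_mixture_le (hlam : 0 ≤ lam)
    (hψ : IsUnitState W ψ) (hφ : IsUnitState W φ) :
    gpEnergy W lam (mixture ψ φ) (deriv (mixture ψ φ)) ≤
      (gpEnergy W lam ψ (deriv ψ) + gpEnergy W lam φ (deriv φ)) / 2 := by
  have hquart : ∫ x, ‖mixture ψ φ x‖ ^ 4 ≤ ((∫ x, ‖ψ x‖ ^ 4) + ∫ x, ‖φ x‖ ^ 4) / 2 := by
    rw [← integral_add hψ.integrable_norm_pow_four hφ.integrable_norm_pow_four, ← integral_div]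
    refine integral_mono_of_nonneg (ae_of_all _ fun x ↦ by positivity)
      ((hψ.integrable_norm_pow_four.add hφ.integrable_norm_pow_four).div_const 2)
      (ae_of_all _ fun x ↦ ?_)
    calc ‖mixture ψ φ x‖ ^ 4 = ((‖ψ x‖ ^ 2 + ‖φ x‖ ^ 2) / 2) ^ 2 := by
          rw [← sq_norm_mixture, ← pow_mul]
      _ ≤ (‖ψ x‖ ^ 4 + ‖φ x‖ ^ 4) / 2 := by nlinarith [sq_nonneg (‖ψ x‖ ^ 2 - ‖φ x‖ ^ 2)]
  simp only [gpEnergy, trapEnergy, deriv_mixture hψ.differentiable hφ.differentiable,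
    sq_norm_mixture, integral_div]
  rw [integral_add hψ.memLp_deriv.norm.integrable_sq hφ.memLp_deriv.norm.integrable_sq,
    integral_add hψ.memLp_potential.norm.integrable_sq hφ.memLp_potential.norm.integrable_sq]
  linarith [mul_le_mul_of_nonneg_left hquart hlam]

end Mixture

section GroundStates

/-- The ground states among the differentiable `E`-valued states of unit mass. -/
def gpGroundStates (E : Type*) [NormedAddCommGroup E] [NormedSpace ℝ E] (W : ℝ → ℝ) (lam : ℝ) :
    Set (ℝ → E) :=
  {ψ | IsUnitState W ψ ∧
    ∀ φ : ℝ → E, IsUnitState W φ → gpEnergy W lam ψ (deriv ψ) ≤ gpEnergy W lam φ (deriv φ)}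

variable {E : Type*} [NormedAddCommGroup E] [InnerProductSpace ℝ E] [CompleteSpace E]
  {W : ℝ → ℝ} {lam : ℝ} {ψ : ℝ → E} {w : ℝ → ℝ}

lemma IsUnitState.exists_mixture_eq_norm_smul (hW : IsTrap W) (hlam : 0 ≤ lam)
    (hw : IsUnitState W w) (hwmin : gpEnergy W lam w (deriv w) = groundEnergy W lam)
    (hpos : ∀ x, 0 < w x) (hψ : IsUnitState W ψ)
    (hψmin : gpEnergy W lam ψ (deriv ψ) ≤ groundEnergy W lam) :
    ∃ c, ∀ x, mixture ψ w x = ‖mixture ψ w x‖ • c := by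
  have hmix := hW.isUnitState_mixture hψ hw
  have hne : ∀ x, mixture ψ w x ≠ 0 := fun x ↦ by
    rw [← norm_ne_zero_iff, ← sq_pos_iff, sq_norm_mixture]
    have := (hpos x).ne'
    positivity
  refine hmix.toIsH1Pair.exists_eq_norm_smul hmix.differentiable hne ?_
  have hle : gpEnergy W lam (mixture ψ w) (deriv (mixture ψ w)) ≤
      gpEnergy W lam (fun x ↦ ‖mixture ψ w x‖) (deriv fun x ↦ ‖mixture ψ w x‖) :=
    (hψ.gpEnergy_mixture_le hlam hw).trans <| by
      linarith [hmix.toIsUnitPair.norm.groundEnergy_le hlam]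
  simpa only [gpEnergy, trapEnergy, norm_norm, add_le_add_iff_right] using hle

lemma IsUnitState.exists_eq_smul (hW : IsTrap W) (hlam : 0 ≤ lam)
    (hw : IsUnitState W w) (hwmin : gpEnergy W lam w (deriv w) = groundEnergy W lam)
    (hpos : ∀ x, 0 < w x) (hψ : IsUnitState W ψ)
    (hψmin : gpEnergy W lam ψ (deriv ψ) ≤ groundEnergy W lam) :
    ∃ c : E, ‖c‖ = 1 ∧ ψ = fun x ↦ w x • c := by
  obtain ⟨c, hc⟩ := hw.exists_mixture_eq_norm_smul hW hlam hwmin hpos hψ hψmin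
  have hfst : ∀ x, (√2)⁻¹ • ψ x = ‖mixture ψ w x‖ • c.fst := fun x ↦ congrArg WithLp.fst (hc x)
  have hsnd : ∀ x, (√2)⁻¹ * w x = ‖mixture ψ w x‖ * c.snd := fun x ↦ congrArg WithLp.snd (hc x)
  have hsqrt : √2 ≠ 0 := by positivity
  have hc0 : c.snd ≠ 0 := fun h0 ↦ by
    simpa [h0, (hpos 0).ne'] using hsnd 0
  have hψw : ψ = fun x ↦ w x • c.snd⁻¹ • c.fst := funext fun x ↦ by
    rw [(inv_smul_eq_iff₀ hsqrt).1 (hfst x), (inv_mul_eq_iff_eq_mul₀ hsqrt).1 (hsnd x), ← mul_assoc,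
      mul_smul _ c.snd, smul_inv_smul₀ hc0, mul_smul]
  refine ⟨_, ?_, hψw⟩
  have hone := hψ.integral_eq_one
  rw [hψw] at hone
  simp only [norm_smul _ (_ • _), mul_pow, integral_mul_const, hw.integral_eq_one, one_mul] at hone
  exact (pow_eq_one_iff_of_nonneg (norm_nonneg _) two_ne_zero).1 hone

lemma IsUnitState.gpGroundStates_eq [Nontrivial E] (hW : IsTrap W) (hlam : 0 ≤ lam)
    (hw : IsUnitState W w) (hwmin : gpEnergy W lam w (deriv w) = groundEnergy W lam)
    (hpos : ∀ x, 0 < w x) :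
    gpGroundStates E W lam = {ψ | ∃ c : E, ‖c‖ = 1 ∧ ψ = fun x ↦ w x • c} := by
  have hphase : ∀ {c : E}, ‖c‖ = 1 → gpEnergy W lam (fun x ↦ w x • c) (deriv fun x ↦ w x • c) =
      groundEnergy W lam := fun hc ↦ (gpEnergy_smul_const hw.differentiable hc).trans hwmin
  ext ψ
  constructor
  · rintro ⟨hψ, hmin⟩
    obtain ⟨c, hc⟩ := exists_norm_eq E zero_le_one
    exact hw.exists_eq_smul hW hlam hwmin hpos hψ
      ((hmin _ (hw.smul_const hW hc)).trans_eq (hphase hc))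
  · rintro ⟨c, hc, rfl⟩
    exact ⟨hw.smul_const hW hc, fun φ hφ ↦ (hphase hc).trans_le (hφ.groundEnergy_le hlam)⟩

lemma IsUnitState.even (hW : IsTrap W) (heven : ∀ x, W (-x) = W x) (hlam : 0 ≤ lam)
    (hw : IsUnitState W w) (hwmin : gpEnergy W lam w (deriv w) = groundEnergy W lam)
    (hpos : ∀ x, 0 < w x) (x : ℝ) : w (-x) = w x := by
  obtain ⟨c, hc, hwc⟩ := hw.exists_eq_smul hW hlam hwmin hpos (hw.comp_neg hW heven)
    ((hW.gpEnergy_comp_neg heven w).trans hwmin).le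
  have hnorm := congrArg norm (congrFun hwc x)
  rwa [norm_smul, hc, mul_one, norm_of_nonneg (hpos _).le, norm_of_nonneg (hpos _).le] at hnorm

end GroundStates

section Phase

lemma setOf_norm_one_smul_eq (w : ℝ → ℝ) :
    {ψ : ℝ → ℂ | ∃ c : ℂ, ‖c‖ = 1 ∧ ψ = fun x ↦ w x • c} =
      {ψ | ∃ θ : ℝ, ψ = fun x ↦ Complex.exp (Complex.I * θ) * (w x : ℂ)} := by
  ext ψ
  simp only [Complex.norm_eq_one_iff, Complex.real_smul, mul_comm Complex.I]
  constructor
  · rintro ⟨_, ⟨θ, rfl⟩, rfl⟩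
    exact ⟨θ, funext fun x ↦ mul_comm _ _⟩
  · rintro ⟨θ, rfl⟩
    exact ⟨_, ⟨θ, rfl⟩, funext fun x ↦ mul_comm _ _⟩

lemma eq_of_ofReal_eq_exp_mul {v w : ℝ → ℝ} (hv : ∀ x, 0 < v x) (hw : ∀ x, 0 < w x) {θ : ℝ}
    (h : (fun x ↦ (v x : ℂ)) = fun x ↦ Complex.exp (Complex.I * θ) * (w x : ℂ)) : v = w := by
  funext x
  have hnorm := congrArg norm (congrFun h x)
  rwa [norm_mul, mul_comm Complex.I, Complex.norm_exp_ofReal_mul_I, one_mul, Complex.norm_real,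
    Complex.norm_real, norm_of_nonneg (hv x).le, norm_of_nonneg (hw x).le] at hnorm

theorem ground_state_unique_up_to_phase_general {W : ℝ → ℝ} {lam : ℝ} (hW : IsTrap W)
    (heven : ∀ ξ, W (-ξ) = W ξ) (hlam : 0 ≤ lam) :
    ∃! ψmin : ℝ → ℝ,
      (∀ ξ, 0 < ψmin ξ) ∧ (∀ ξ, ψmin (-ξ) = ψmin ξ) ∧
      IsUnitState W (fun ξ ↦ (ψmin ξ : ℂ)) ∧
      gpGroundStates ℂ W lam =
        {ψ | ∃ θ : ℝ, ψ = fun ξ ↦ Complex.exp (Complex.I * θ) * (ψmin ξ : ℂ)} := by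
  obtain ⟨w, hw, hmin, hpos⟩ := hW.exists_pos_isUnitState hlam
  have hground := (hw.gpGroundStates_eq hW hlam hmin hpos).trans (setOf_norm_one_smul_eq w)
  have hwc : IsUnitState W fun ξ ↦ (w ξ : ℂ) := by
    simpa using hw.smul_const hW (norm_one (α := ℂ))
  refine ⟨w, ⟨hpos, hw.even hW heven hlam hmin hpos, hwc, hground⟩, ?_⟩
  rintro v ⟨hv, -, -, hvground⟩
  have hmem : (fun ξ ↦ (v ξ : ℂ)) ∈ gpGroundStates ℂ W lam := hvground ▸ ⟨0, by simp⟩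
  obtain ⟨θ, hθ⟩ := hground ▸ hmem
  exact eq_of_ofReal_eq_exp_mul hv hpos hθ

end Phase

section OpticalLattice

/-- The potential of the optical lattice in the harmonic trap, raised by `|V₀|` to be
nonnegative. -/
noncomputable def latticeTrap (V₀ α ξ : ℝ) : ℝ :=
  ξ ^ 2 + (|V₀| - V₀ * cos (α * ξ) ^ 2)

lemma mul_cos_sq_le_abs (V₀ t : ℝ) : V₀ * cos t ^ 2 ≤ |V₀| :=
  (mul_le_mul_of_nonneg_right (le_abs_self V₀) (sq_nonneg _)).trans
    (mul_le_of_le_one_right (abs_nonneg V₀) (cos_sq_le_one t))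

lemma sq_le_latticeTrap (V₀ α ξ : ℝ) : ξ ^ 2 ≤ latticeTrap V₀ α ξ :=
  le_add_of_nonneg_right (sub_nonneg.2 (mul_cos_sq_le_abs V₀ (α * ξ)))

lemma isTrap_latticeTrap (V₀ α : ℝ) : IsTrap (latticeTrap V₀ α) where
  continuous := by unfold latticeTrap; fun_prop
  nonneg ξ := (sq_nonneg ξ).trans (sq_le_latticeTrap V₀ α ξ)
  tendsto_atTop := by
    refine tendsto_atTop_mono (sq_le_latticeTrap V₀ α) ?_
    simpa only [norm_eq_abs, sq_abs, Function.comp_def] using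
      (tendsto_pow_atTop two_ne_zero).comp (tendsto_norm_cocompact_atTop (E := ℝ))

lemma latticeTrap_neg (V₀ α ξ : ℝ) : latticeTrap V₀ α (-ξ) = latticeTrap V₀ α ξ := by
  simp only [latticeTrap, mul_neg, cos_neg, neg_sq]

lemma integrable_cos_sq_mul {ρ : ℝ → ℝ} (hρ : Integrable ρ) (α : ℝ) :
    Integrable fun ξ ↦ cos (α * ξ) ^ 2 * ρ ξ :=
  hρ.bdd_mul (c := 1) (by fun_prop) (ae_of_all _ fun ξ ↦ by
    simpa only [norm_pow, norm_eq_abs, sq_abs] using cos_sq_le_one (α * ξ))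

lemma integrable_latticeTrap_mul_iff {ρ : ℝ → ℝ} (hρ : Integrable ρ) (V₀ α : ℝ) :
    Integrable (fun ξ ↦ latticeTrap V₀ α ξ * ρ ξ) ↔ Integrable fun ξ ↦ ξ ^ 2 * ρ ξ := by
  have hbdd : Integrable fun ξ ↦ |V₀| * ρ ξ - V₀ * (cos (α * ξ) ^ 2 * ρ ξ) :=
    (hρ.const_mul _).sub ((integrable_cos_sq_mul hρ α).const_mul _)
  refine (integrable_congr (ae_of_all _ fun ξ ↦ ?_)).trans
    (integrable_add_iff_integrable_left' hbdd)
  simp only [latticeTrap]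
  ring

lemma inSigma1_iff (V₀ α : ℝ) {ψ : ℝ → ℂ} :
    InSigma1 ψ ↔ IsUnitState (latticeTrap V₀ α) ψ := by
  constructor
  · rintro ⟨⟨hd, hsq, hsq', hpot, -⟩, hone⟩
    exact (isTrap_latticeTrap V₀ α).isUnitState_iff.2
      ⟨hd, hsq, hsq', (integrable_latticeTrap_mul_iff hsq V₀ α).2 hpot, hone⟩
  · intro hψ
    obtain ⟨hd, hsq, hsq', hpot, hone⟩ := (isTrap_latticeTrap V₀ α).isUnitState_iff.1 hψ
    exact ⟨⟨hd, hsq, hsq', (integrable_latticeTrap_mul_iff hsq V₀ α).1 hpot,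
      hψ.integrable_norm_pow_four⟩, hone⟩

lemma gpEnergy_latticeTrap (lam V₀ α : ℝ) {ψ : ℝ → ℂ} (hψ : InSigma1 ψ) :
    gpEnergy (latticeTrap V₀ α) lam ψ (deriv ψ) = energy lam V₀ α ψ + |V₀| := by
  obtain ⟨⟨-, hsq, -, hpot, -⟩, hone⟩ := hψ
  have hW : ∫ ξ, latticeTrap V₀ α ξ * ‖ψ ξ‖ ^ 2 = (∫ ξ, ξ ^ 2 * ‖ψ ξ‖ ^ 2) +
      (|V₀| - V₀ * ∫ ξ, cos (α * ξ) ^ 2 * ‖ψ ξ‖ ^ 2) := by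
    have hcos := (integrable_cos_sq_mul hsq α).const_mul V₀
    simp only [latticeTrap, add_mul, sub_mul, mul_assoc]
    rw [integral_add hpot ((hsq.const_mul _).sub' hcos), integral_sub (hsq.const_mul _) hcos,
      integral_const_mul, integral_const_mul, hone, mul_one]
  rw [(isTrap_latticeTrap V₀ α).gpEnergy_eq, hW, energy]
  ring

lemma groundStates_eq (lam V₀ α : ℝ) :
    groundStates lam V₀ α = gpGroundStates ℂ (latticeTrap V₀ α) lam := by
  ext ψ
  simp only [groundStates, gpGroundStates, mem_ofPred_eq, ← inSigma1_iff V₀ α]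
  refine and_congr_right fun hψ ↦ forall₂_congr fun φ hφ ↦ ?_
  rw [gpEnergy_latticeTrap _ _ _ hψ, gpEnergy_latticeTrap _ _ _ hφ, add_le_add_iff_right]

end OpticalLattice

theorem ground_state_unique_up_to_phase (lam V₀ α : ℝ) (hlam : 0 ≤ lam) :
    ∃! ψmin : ℝ → ℝ,
      (∀ ξ : ℝ, 0 < ψmin ξ) ∧ (∀ ξ : ℝ, ψmin (-ξ) = ψmin ξ) ∧
      InSigma1 (fun ξ => (ψmin ξ : ℂ)) ∧
      groundStates lam V₀ α =
        {ψ | ∃ θ : ℝ, ψ = fun ξ => Complex.exp (Complex.I * θ) * (ψmin ξ : ℂ)} := by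
  simpa only [inSigma1_iff V₀ α, groundStates_eq] using
    ground_state_unique_up_to_phase_general (isTrap_latticeTrap V₀ α) (latticeTrap_neg V₀ α) hlam
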